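/- For any pseudo-Anosov braid x ∈ B_n there exist a conjugate y of x and an integer M with 1 ≤ M ≤ D³, where D = n(n−1)/2, such that y^M is weakly cyclically weighted. -/

import Mathlib

/-! Basic definitions for the braid group `B_n`, its Garside structure,
and related notions, following Garside/El-Rifai–Morton.
Generators are indexed by `i : Fin (n-1)`, with `σ i` corresponding to the
Artin generator `σ_{i+1}` (1-based) of the paper. -/

/-- The braid relations, as a set of elements of the free group. -/
def braidRels (n : ℕ) : Set (FreeGroup (Fin (n - 1))) :=
  { r | (∃ i j : Fin (n - 1), (i : ℕ) + 1 < (j : ℕ) ∧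
          r = .of i * .of j * (.of i)⁻¹ * (.of j)⁻¹) ∨
        (∃ i j : Fin (n - 1), (i : ℕ) + 1 = (j : ℕ) ∧
          r = (.of i * .of j * .of i) * (.of j * .of i * .of j)⁻¹) }

/-- The braid group on `n` strands. -/
abbrev BraidGroup (n : ℕ) := PresentedGroup (braidRels n)

namespace BraidGroup

variable {n : ℕ}

/-- The Artin generator `σ_{i+1}` (`i` is a 0-based index). -/
def σ (i : Fin (n - 1)) : BraidGroup n := PresentedGroup.of i

/-- `σ'` with a natural-number 0-based index (junk value `1` out of range). -/
def σ' (n : ℕ) (i : ℕ) : BraidGroup n := if h : i < n - 1 then σ ⟨i, h⟩ else 1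

/-- The fundamental braid `Δ = (σ_1⋯σ_{n-1})(σ_1⋯σ_{n-2})⋯(σ_1σ_2)σ_1`. -/
def Δ (n : ℕ) : BraidGroup n :=
  (((List.range (n - 1)).reverse).map
    (fun j => ((List.range (j + 1)).map (σ' n)).prod)).prod

/-- The monoid of positive braids inside `B_n` (the image of `B_n^+`). -/
def positives (n : ℕ) : Submonoid (BraidGroup n) :=
  Submonoid.closure (Set.range (σ (n := n)))

/-- `x` is a positive braid. -/
def IsPositive (x : BraidGroup n) : Prop := x ∈ positives n

/-- The prefix (left-divisibility) order: `x ≼ y` iff `x⁻¹y` is positive. -/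
def LeftDvd (x y : BraidGroup n) : Prop := ∃ p, IsPositive p ∧ x * p = y

/-- The right-divisibility order: `x ≼_R y` iff `y x⁻¹` is positive. -/
def RightDvd (x y : BraidGroup n) : Prop := ∃ p, IsPositive p ∧ p * x = y

/-- Permutation braids: positive left divisors of `Δ`. -/
def IsPermBraid (x : BraidGroup n) : Prop := IsPositive x ∧ LeftDvd x (Δ n)

/-- The involution `τ` of `B_n`, determined by `τ(σ_i) = σ_{n-i}`
(on 0-based indices: `i ↦ (n-2) - i`, i.e. `Fin.rev`). -/
noncomputable def τ (n : ℕ) : BraidGroup n →* BraidGroup n :=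
  Classical.epsilon (fun f => ∀ i : Fin (n - 1), f (σ i) = σ i.rev)

/-- `τ^u` for an integer `u`: equals `τ` for odd `u` and the identity for even `u`
(`τ` is an involution). -/
noncomputable def τpow (u : ℤ) (x : BraidGroup n) : BraidGroup n :=
  if Even u then x else τ n x

/-- The product `a⬝b` of a permutation braid `a` and a positive braid `b` is left
weighted iff `a* ∧ b = e`, i.e. no generator left-divides both `a* = a⁻¹Δ` and `b`. -/
def IsLeftWeighted (a b : BraidGroup n) : Prop :=
  ∀ i : Fin (n - 1), ¬ (LeftDvd (σ i) (a⁻¹ * Δ n) ∧ LeftDvd (σ i) b)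

/-- `Δ^u x_1 ⋯ x_k` is the left weighted form of `x`, where `L = [x_1, …, x_k]`. -/
def IsWeightedForm (u : ℤ) (L : List (BraidGroup n)) (x : BraidGroup n) : Prop :=
  (∀ a ∈ L, IsPermBraid a ∧ a ≠ 1 ∧ a ≠ Δ n) ∧
  L.Chain' IsLeftWeighted ∧
  x = (Δ n) ^ u * L.prod

/-- The left weighted form of a braid (chosen by choice; it exists and is unique). -/
noncomputable def wf (x : BraidGroup n) : ℤ × List (BraidGroup n) :=
  Classical.epsilon (fun p => IsWeightedForm p.1 p.2 x)

/-- The infimum `inf(x)`. -/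
noncomputable def binf (x : BraidGroup n) : ℤ := (wf x).1

/-- The canonical length `ℓ(x)`. -/
noncomputable def blen (x : BraidGroup n) : ℕ := (wf x).2.length

/-- The supremum `sup(x) = inf(x) + ℓ(x)`. -/
noncomputable def bsup (x : BraidGroup n) : ℤ := binf x + blen x

/-- The head `H(x)`: the first factor of the weighted form. -/
noncomputable def bhead (x : BraidGroup n) : BraidGroup n := ((wf x).2.head?).getD 1

/-- The tail `T(x)`: the last factor of the weighted form. -/
noncomputable def btail (x : BraidGroup n) : BraidGroup n := ((wf x).2.getLast?).getD 1

/-- Cycling: `c(x) = τ^u(H(x))⁻¹ · x · τ^u(H(x))`. -/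
noncomputable def cyc (x : BraidGroup n) : BraidGroup n :=
  (τpow (binf x) (bhead x))⁻¹ * x * τpow (binf x) (bhead x)

/-- Decycling: `d(x) = T(x) · x · T(x)⁻¹`. -/
noncomputable def decyc (x : BraidGroup n) : BraidGroup n :=
  btail x * x * (btail x)⁻¹

/-- `x` is cyclically weighted: `x_k ⬝ τ^u(x_1)` is left weighted. -/
noncomputable def IsCW (x : BraidGroup n) : Prop :=
  IsLeftWeighted (btail x) (τpow (binf x) (bhead x))

/-- `x` is weakly cyclically weighted: `H(x·τ^u(H(x))) = H(x)`. -/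
noncomputable def IsWCW (x : BraidGroup n) : Prop :=
  bhead (x * τpow (binf x) (bhead x)) = bhead x

/-- The summit set of `x`: conjugates with maximal infimum. -/
def SS (x : BraidGroup n) : Set (BraidGroup n) :=
  { y | IsConj x y ∧ ∀ z, IsConj x z → binf z ≤ binf y }

/-- The super summit set of `x`: conjugates with maximal infimum and minimal supremum. -/
def SSS (x : BraidGroup n) : Set (BraidGroup n) :=
  { y | y ∈ SS x ∧ ∀ z, IsConj x z → bsup y ≤ bsup z }

/-- The ultra summit set of `x`. -/
def USS (x : BraidGroup n) : Set (BraidGroup n) :=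
  { y ∈ SSS x | ∃ M : ℕ, 0 < M ∧ cyc^[M] y = y }

/-- The reduced super summit set of `x`. -/
def RSSS (x : BraidGroup n) : Set (BraidGroup n) :=
  { y | IsConj x y ∧ (∃ M : ℕ, 0 < M ∧ cyc^[M] y = y) ∧
        (∃ N : ℕ, 0 < N ∧ decyc^[N] y = y) }

/-- The left meet (greatest common left divisor) of two braids. -/
noncomputable def leftMeet (a b : BraidGroup n) : BraidGroup n :=
  Classical.epsilon (fun m => IsPositive m ∧ LeftDvd m a ∧ LeftDvd m b ∧
    ∀ c, IsPositive c → LeftDvd c a → LeftDvd c b → LeftDvd c m)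

/-- `x` is periodic: some positive power of `x` is a power of `Δ²`. -/
def IsPeriodic (x : BraidGroup n) : Prop :=
  ∃ m : ℕ, 0 < m ∧ ∃ k : ℤ, x ^ m = (Δ n) ^ (2 * k)

/-- The free generator `x_{i+1}` of `π₁` of the `n`-punctured disk (0-based index;
junk value `1` out of range). -/
def freeGen (n : ℕ) (i : ℕ) : FreeGroup (Fin n) := if h : i < n then .of ⟨i, h⟩ else 1

/-- The Artin action of `B_n` on the free group `F_n`:
`σ_i` sends `x_i ↦ x_i x_{i+1} x_i⁻¹`, `x_{i+1} ↦ x_i`, fixing the other generators. -/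
noncomputable def artin (n : ℕ) : BraidGroup n →* Monoid.End (FreeGroup (Fin n)) :=
  Classical.epsilon (fun f => ∀ i : Fin (n - 1),
    f (σ i) = FreeGroup.lift (fun j : Fin n =>
      if (j : ℕ) = (i : ℕ) then freeGen n i * freeGen n (i + 1) * (freeGen n i)⁻¹
      else if (j : ℕ) = (i : ℕ) + 1 then freeGen n i
      else FreeGroup.of j))

/-- The element of `π₁` represented by the round curve enclosing punctures
`I.1 + 1, …, I.2` (1-based): the product `x_{I.1+1} ⋯ x_{I.2}`. -/
def curveWord (n : ℕ) (I : ℕ × ℕ) : FreeGroup (Fin n) :=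
  ((List.range (I.2 - I.1)).map (fun t => freeGen n (I.1 + t))).prod

/-- An essential round curve: it encloses at least `2` and at most `n-1` punctures. -/
def EssentialCurve (n : ℕ) (I : ℕ × ℕ) : Prop :=
  I.1 + 2 ≤ I.2 ∧ I.2 ≤ n ∧ I.2 - I.1 ≤ n - 1

/-- Two round curves are disjoint (as curves): the intervals are disjoint or nested. -/
def CurvesCompatible (I J : ℕ × ℕ) : Prop :=
  I.2 ≤ J.1 ∨ J.2 ≤ I.1 ∨ (I.1 ≤ J.1 ∧ J.2 ≤ I.2) ∨ (J.1 ≤ I.1 ∧ I.2 ≤ J.2)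

/-- `x` is reducible: some conjugate of `x` preserves, up to conjugacy in `π₁`
(i.e. up to isotopy) and orientation, a nonempty system of disjoint essential
round curves. -/
noncomputable def IsReducible (x : BraidGroup n) : Prop :=
  ∃ y, IsConj x y ∧ ∃ F : Finset (ℕ × ℕ), F.Nonempty ∧
    (∀ I ∈ F, EssentialCurve n I) ∧
    (∀ I ∈ F, ∀ J ∈ F, I ≠ J → CurvesCompatible I J) ∧
    (∀ I ∈ F, ∃ J ∈ F, ∃ g : FreeGroup (Fin n),
      artin n y (curveWord n I) = g * curveWord n J * g⁻¹ ∨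
      artin n y (curveWord n I) = g * (curveWord n J)⁻¹ * g⁻¹)

/-- `x` is pseudo-Anosov: neither periodic nor reducible (Nielsen–Thurston). -/
noncomputable def IsPseudoAnosov (x : BraidGroup n) : Prop :=
  ¬ IsPeriodic x ∧ ¬ IsReducible x

/-- `σ_i` (1-based index `i`) left-divides the positive braid `w`, i.e. `i` is
 a descent of `w`. -/
def HasDescent (n : ℕ) (i : ℕ) (w : BraidGroup n) : Prop := LeftDvd (σ' n (i - 1)) w

/-- `D(n,k,i)`: the probability that a product of `k` independent uniformly random
permutation braids begins with the descent `i` (1-based), computed by counting. -/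
noncomputable def descentProb (n k : ℕ) (i : ℕ) : ℝ :=
  ({ f : Fin k → BraidGroup n | (∀ j, IsPermBraid (f j)) ∧
      HasDescent n i (List.ofFn f).prod }.ncard : ℝ) / (n.factorial ^ k : ℝ)

/-- `D(n,k)`: the expected number of descents of a product of `k` random
permutation braids. -/
noncomputable def descentExp (n k : ℕ) : ℝ :=
  ∑ i ∈ Finset.Icc 1 (n - 1), descentProb n k i

/-- `d(n,k) = D(n,k) - D(n,k-1)`: the expected number of descents contributed by
the `k`-th factor. -/
noncomputable def descentInc (n k : ℕ) : ℝ := descentExp n k - descentExp n (k - 1)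

end BraidGroup

namespace BraidAux

/-- adjacency of indices -/
def Adj {m : ℕ} (i j : Fin m) : Prop := (i : ℕ) + 1 = j ∨ (j : ℕ) + 1 = i
/-- far apart indices -/
def Far {m : ℕ} (i j : Fin m) : Prop := (i : ℕ) + 1 < j ∨ (j : ℕ) + 1 < i

theorem tri {m : ℕ} (i j : Fin m) : i = j ∨ Adj i j ∨ Far i j := by
  unfold Adj Far
  rw [Fin.ext_iff]
  omega

theorem Adj.symm {m : ℕ} {i j : Fin m} (h : Adj i j) : Adj j i := Or.symm h
theorem Far.symm {m : ℕ} {i j : Fin m} (h : Far i j) : Far j i := Or.symm h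

theorem Adj.ne {m : ℕ} {i j : Fin m} (h : Adj i j) : i ≠ j := by
  rintro rfl; unfold Adj at h; omega
theorem Far.ne {m : ℕ} {i j : Fin m} (h : Far i j) : i ≠ j := by
  rintro rfl; unfold Far at h; omega
theorem Adj.not_far {m : ℕ} {i j : Fin m} (h : Adj i j) : ¬ Far i j := by
  unfold Adj at h; unfold Far; omega
theorem not_triangle {m : ℕ} {i j k : Fin m} (h : Adj i k) (h' : Adj k j) : ¬ Adj i j := by
  unfold Adj at *; omega

/-- one elementary transformation of positive words -/
inductive Step {m : ℕ} : List (Fin m) → List (Fin m) → Prop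
  | far (i j : Fin m) (w : List (Fin m)) (h : Far i j) : Step (i :: j :: w) (j :: i :: w)
  | adj (i j : Fin m) (w : List (Fin m)) (h : Adj i j) :
      Step (i :: j :: i :: w) (j :: i :: j :: w)
  | cons (i : Fin m) {u v : List (Fin m)} (h : Step u v) : Step (i :: u) (i :: v)

theorem Step.symm {m : ℕ} {u v : List (Fin m)} (h : Step u v) : Step v u := by
  induction h with
  | far i j w h => exact .far j i w h.symm
  | adj i j w h => exact .adj j i w h.symm
  | cons i _ ih => exact .cons i ih

theorem Step.length {m : ℕ} {u v : List (Fin m)} (h : Step u v) : u.length = v.length := by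
  induction h with
  | far i j w h => simp
  | adj i j w h => simp
  | cons i _ ih => simp [ih]

theorem Step.append {m : ℕ} {u v : List (Fin m)} (h : Step u v) (w : List (Fin m)) :
    Step (u ++ w) (v ++ w) := by
  induction h with
  | far i j w h => exact .far _ _ _ h
  | adj i j w h => exact .adj _ _ _ h
  | cons i _ ih => exact .cons i ih

/-- equivalence of positive words -/
def Eqv {m : ℕ} : List (Fin m) → List (Fin m) → Prop := Relation.ReflTransGen Step

theorem Eqv.rfl {m : ℕ} {u : List (Fin m)} : Eqv u u := Relation.ReflTransGen.refl
theorem Eqv.trans {m : ℕ} {u v w : List (Fin m)} (h : Eqv u v) (h' : Eqv v w) : Eqv u w :=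
  Relation.ReflTransGen.trans h h'
theorem Eqv.symm {m : ℕ} {u v : List (Fin m)} (h : Eqv u v) : Eqv v u := by
  induction h with
  | refl => exact .rfl
  | tail _ h ih => exact Relation.ReflTransGen.head h.symm ih
theorem Eqv.length {m : ℕ} {u v : List (Fin m)} (h : Eqv u v) : u.length = v.length := by
  induction h with
  | refl => rfl
  | tail _ h ih => exact ih.trans h.length
theorem Eqv.cons {m : ℕ} {u v : List (Fin m)} (i : Fin m) (h : Eqv u v) :
    Eqv (i :: u) (i :: v) := by
  induction h with
  | refl => exact .rfl
  | tail _ h ih => exact Relation.ReflTransGen.tail ih (.cons i h)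
theorem Eqv.append_right {m : ℕ} {u v : List (Fin m)} (h : Eqv u v) (w : List (Fin m)) :
    Eqv (u ++ w) (v ++ w) := by
  induction h with
  | refl => exact .rfl
  | tail _ h ih => exact Relation.ReflTransGen.tail ih (h.append w)
theorem Eqv.append_left {m : ℕ} {u v : List (Fin m)} (h : Eqv u v) (w : List (Fin m)) :
    Eqv (w ++ u) (w ++ v) := by
  induction w with
  | nil => exact h
  | cons i w ih => exact ih.cons i
theorem Eqv.append {m : ℕ} {u v u' v' : List (Fin m)} (h : Eqv u v) (h' : Eqv u' v') :
    Eqv (u ++ u') (v ++ v') := (h.append_right u').trans (h'.append_left v)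

theorem Eqv.far {m : ℕ} {i j : Fin m} (w : List (Fin m)) (h : Far i j) :
    Eqv (i :: j :: w) (j :: i :: w) := Relation.ReflTransGen.single (.far i j w h)
theorem Eqv.adj {m : ℕ} {i j : Fin m} (w : List (Fin m)) (h : Adj i j) :
    Eqv (i :: j :: i :: w) (j :: i :: j :: w) := Relation.ReflTransGen.single (.adj i j w h)

/-- the congruence of positive words, with the multiplication of the free monoid -/
def bcon (m : ℕ) : Con (FreeMonoid (Fin m)) where
  r u v := Eqv u.toList v.toList
  iseqv := ⟨fun _ => .rfl, fun h => h.symm, fun h h' => h.trans h'⟩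
  mul' h h' := by
    simpa using Eqv.append h h'

/-- The conclusion of the key lemma of Garside -/
def Cc {m : ℕ} (i j : Fin m) (u v : List (Fin m)) : Prop :=
  (i = j ∧ Eqv u v) ∨ (Adj i j ∧ ∃ w, Eqv u (j :: i :: w) ∧ Eqv v (i :: j :: w)) ∨
  (Far i j ∧ ∃ w, Eqv u (j :: w) ∧ Eqv v (i :: w))

theorem Cc.symm {m : ℕ} {i j : Fin m} {u v : List (Fin m)} (h : Cc i j u v) : Cc j i v u := by
  rcases h with ⟨h, h'⟩ | ⟨h, w, h1, h2⟩ | ⟨h, w, h1, h2⟩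
  · exact Or.inl ⟨h.symm, h'.symm⟩
  · exact Or.inr (Or.inl ⟨h.symm, w, h2, h1⟩)
  · exact Or.inr (Or.inr ⟨h.symm, w, h2, h1⟩)

theorem Cc.cancel {m : ℕ} {i : Fin m} {u v : List (Fin m)} (h : Cc i i u v) : Eqv u v := by
  rcases h with ⟨_, h'⟩ | ⟨h, _⟩ | ⟨h, _⟩
  · exact h'
  · exact absurd rfl h.ne
  · exact absurd rfl h.ne

theorem Cc.of_adj {m : ℕ} {i j : Fin m} {u v : List (Fin m)} (a : Adj i j) (h : Cc i j u v) :
    ∃ w, Eqv u (j :: i :: w) ∧ Eqv v (i :: j :: w) := by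
  rcases h with ⟨h, h'⟩ | ⟨h, h'⟩ | ⟨h, _⟩
  · exact absurd h a.ne
  · exact h'
  · exact absurd h a.not_far

theorem Cc.of_far {m : ℕ} {i j : Fin m} {u v : List (Fin m)} (a : Far i j) (h : Cc i j u v) :
    ∃ w, Eqv u (j :: w) ∧ Eqv v (i :: w) := by
  rcases h with ⟨h, h'⟩ | ⟨h, h'⟩ | ⟨h, h'⟩
  · exact absurd h a.ne
  · exact absurd a h.not_far
  · exact h'

theorem Cc.of_step {m : ℕ} {i j : Fin m} {u v : List (Fin m)} (h : Step (i :: u) (j :: v)) :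
    Cc i j u v := by
  cases h with
  | far _ _ w h => exact Or.inr (Or.inr ⟨h, w, .rfl, .rfl⟩)
  | adj _ _ w h => exact Or.inr (Or.inl ⟨h, w, .rfl, .rfl⟩)
  | cons _ h => exact Or.inl ⟨rfl, Relation.ReflTransGen.single h⟩

/-- far-adjacent case of transitivity -/
theorem far_adj {m L : ℕ}
    (IH : ∀ (i j : Fin m) (u v : List (Fin m)), u.length < L → Eqv (i :: u) (j :: v) → Cc i j u v)
    {i k j : Fin m} {u w v : List (Fin m)} (hL : w.length ≤ L)
    (hik : Far i k) (hkj : Adj k j)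
    (h1 : Cc i k u w) (h2 : Cc k j w v) : Cc i j u v := by
  obtain ⟨w1, hu, hw1⟩ := h1.of_far hik
  obtain ⟨w2, hw2, hv⟩ := h2.of_adj hkj
  have l1 := hw1.length
  have l2 := hw2.length
  simp only [List.length_cons] at l1 l2
  have c1 := IH i j w1 (k :: w2) (by omega) (hw1.symm.trans hw2)
  rcases tri i j with hij | hij | hij
  · subst hij; exact absurd hik hkj.symm.not_far
  · obtain ⟨z, hz1, hz2⟩ := c1.of_adj hij
    have l3 := hz2.length
    simp only [List.length_cons] at l3
    obtain ⟨y, hy1, hy2⟩ := (IH k i w2 (j :: z) (by omega) hz2).of_far hik.symm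
    have l4 := hy2.length
    simp only [List.length_cons] at l4
    obtain ⟨x, hx1, hx2⟩ := (IH j k z y (by omega) hy2).of_adj hkj.symm
    refine Or.inr (Or.inl ⟨hij, k :: j :: i :: x, ?_, ?_⟩)
    · -- u ~ k w1 ~ k j i z ~ k j i k j x
      refine hu.trans ((hz1.cons k).trans ?_)
      refine (((hx1.cons i).cons j).cons k).trans ?_
      refine (((Eqv.far (j :: x) hik).cons j).cons k).trans ?_
      refine (Eqv.adj _ hkj).trans ?_
      refine (((Eqv.adj _ hij.symm).cons k).cons j).trans ?_
      exact (Eqv.far _ hik.symm).cons j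
    · -- v ~ k j w2 ~ k j i y ~ k j i j k x
      refine hv.trans (((hy1.cons j).cons k).trans ?_)
      refine (((hx2.cons i).cons j).cons k).trans ?_
      refine ((Eqv.adj _ hij.symm).cons k).trans ?_
      refine (Eqv.far _ hik.symm).trans ?_
      refine ((((Eqv.far x hik).cons j).cons k).cons i).trans ?_
      exact (Eqv.adj _ hkj).cons i
  · obtain ⟨z, hz1, hz2⟩ := c1.of_far hij
    have l3 := hz2.length
    simp only [List.length_cons] at l3
    obtain ⟨y, hy1, hy2⟩ := (IH k i w2 z (by omega) hz2).of_far hik.symm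
    refine Or.inr (Or.inr ⟨hij, k :: j :: y, ?_, ?_⟩)
    · refine hu.trans ((hz1.cons k).trans ?_)
      refine ((hy2.cons j).cons k).trans ?_
      exact Eqv.adj _ hkj
    · refine hv.trans (((hy1.cons j).cons k).trans ?_)
      refine ((Eqv.far _ hij.symm).cons k).trans ?_
      exact Eqv.far _ hik.symm

theorem Cc.trans {m L : ℕ}
    (IH : ∀ (i j : Fin m) (u v : List (Fin m)), u.length < L → Eqv (i :: u) (j :: v) → Cc i j u v)
    {i k j : Fin m} {u w v : List (Fin m)} (hL : w.length ≤ L)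
    (h1 : Cc i k u w) (h2 : Cc k j w v) : Cc i j u v := by
  rcases tri i k with hik | hik | hik
  · subst hik
    have := h1.cancel
    rcases h2 with ⟨h, h'⟩ | ⟨h, w, h1, h2⟩ | ⟨h, w, h1, h2⟩
    · exact Or.inl ⟨h, this.trans h'⟩
    · exact Or.inr (Or.inl ⟨h, w, this.trans h1, h2⟩)
    · exact Or.inr (Or.inr ⟨h, w, this.trans h1, h2⟩)
  · rcases tri k j with hkj | hkj | hkj
    · subst hkj
      have := h2.cancel.symm
      obtain ⟨w, h1, h2⟩ := h1.of_adj hik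
      exact Or.inr (Or.inl ⟨hik, w, h1, this.trans h2⟩)
    · obtain ⟨w1, hu, hw1⟩ := h1.of_adj hik
      obtain ⟨w2, hw2, hv⟩ := h2.of_adj hkj
      have l1 := hw1.length
      have l2 := hw2.length
      simp only [List.length_cons] at l1 l2
      have c1 := IH i j (k :: w1) (k :: w2) (by simp only [List.length_cons]; omega)
        (hw1.symm.trans hw2)
      rcases tri i j with hij | hij | hij
      · subst hij
        have := (IH k k w1 w2 (by omega) c1.cancel).cancel
        exact Or.inl ⟨rfl, hu.trans (((this.cons i).cons k).trans hv.symm)⟩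
      · exact absurd hij (not_triangle hik hkj)
      · obtain ⟨z, hz1, hz2⟩ := c1.of_far hij
        have l3 := hz2.length
        have l3' := hz1.length
        simp only [List.length_cons] at l3 l3'
        obtain ⟨y, hy1, hy2⟩ := (IH k j w1 z (by omega) hz1).of_adj hkj
        obtain ⟨y', hy1', hy2'⟩ := (IH k i w2 z (by omega) hz2).of_adj hik.symm
        have l4 := hy2.length
        have l4' := hy2'.length
        simp only [List.length_cons] at l4 l4'
        have c2 := (IH k k (j :: y) (i :: y') (by simp only [List.length_cons]; omega)
          (hy2.symm.trans hy2')).cancel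
        obtain ⟨x, hx1, hx2⟩ := (IH j i y y' (by omega) c2).of_far hij.symm
        -- u ~ k i w1 ~ k i j k y ~ k i j k i x
        refine Or.inr (Or.inr ⟨hij, k :: j :: i :: k :: x, ?_, ?_⟩)
        · refine hu.trans (((hy1.cons i).cons k).trans ?_)
          refine ((((hx1.cons k).cons j).cons i).cons k).trans ?_
          refine ((Eqv.far _ hij).cons k).trans ?_
          refine (((Eqv.adj _ hik).cons j).cons k).trans ?_
          exact Eqv.adj _ hkj
        · refine hv.trans (((hy1'.cons j).cons k).trans ?_)
          refine ((((hx2.cons k).cons i).cons j).cons k).trans ?_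
          refine ((Eqv.far _ hij.symm).cons k).trans ?_
          refine (((Eqv.adj _ hkj.symm).cons i).cons k).trans ?_
          refine (Eqv.adj _ hik.symm).trans ?_
          exact ((Eqv.far _ hij).cons k).cons i
    · refine (far_adj (L := L) IH hL hkj.symm hik.symm h2.symm h1.symm).symm
  · rcases tri k j with hkj | hkj | hkj
    · subst hkj
      have := h2.cancel.symm
      obtain ⟨w, h1, h2⟩ := h1.of_far hik
      exact Or.inr (Or.inr ⟨hik, w, h1, this.trans h2⟩)
    · exact far_adj (L := L) IH hL hik hkj h1 h2
    · obtain ⟨w1, hu, hw1⟩ := h1.of_far hik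
      obtain ⟨w2, hw2, hv⟩ := h2.of_far hkj
      have l1 := hw1.length
      have l2 := hw2.length
      simp only [List.length_cons] at l1 l2
      have c1 := IH i j w1 w2 (by omega) (hw1.symm.trans hw2)
      rcases c1 with ⟨h, h'⟩ | ⟨h, z, h1, h2⟩ | ⟨h, z, h1, h2⟩
      · exact Or.inl ⟨h, hu.trans ((h'.cons k).trans hv.symm)⟩
      · refine Or.inr (Or.inl ⟨h, k :: z, ?_, ?_⟩)
        · refine hu.trans ((h1.cons k).trans ?_)
          exact (Eqv.far _ hkj).trans ((Eqv.far _ hik.symm).cons j)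
        · refine hv.trans ((h2.cons k).trans ?_)
          exact (Eqv.far _ hik.symm).trans ((Eqv.far _ hkj).cons i)
      · refine Or.inr (Or.inr ⟨h, k :: z, ?_, ?_⟩)
        · refine hu.trans ((h1.cons k).trans ?_)
          exact (Eqv.far _ hkj)
        · refine hv.trans ((h2.cons k).trans ?_)
          exact (Eqv.far _ hik.symm)

theorem key {m : ℕ} (L : ℕ) : ∀ (i j : Fin m) (u v : List (Fin m)), u.length < L →
    Eqv (i :: u) (j :: v) → Cc i j u v := by
  induction L with
  | zero => intro i j u v h; omega
  | succ L IH =>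
    intro i j u v hu h
    have gen : ∀ a b : List (Fin m), Eqv a b → ∀ i u, a = i :: u → u.length ≤ L →
        ∀ j v, b = j :: v → Cc i j u v := by
      intro a b h
      induction h with
      | refl =>
        rintro i u rfl _ j v h
        obtain ⟨rfl, rfl⟩ := List.cons.inj h
        exact Or.inl ⟨rfl, .rfl⟩
      | @tail b c hab hbc ih =>
        rintro i u rfl hl j v rfl
        have l1 := Eqv.length hab
        cases b with
        | nil => simp at l1
        | cons k w =>
          simp only [List.length_cons] at l1
          exact Cc.trans IH (by omega) (ih i u rfl hl k w rfl) (.of_step hbc)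
    exact gen _ _ h i u rfl (by omega) j v rfl


section delta
variable {N : Type*} [Monoid N]

/-- product of the first `k` generators -/
def Pi (s : ℕ → N) (k : ℕ) : N := ((List.range k).map s).prod
/-- the abstract fundamental element -/
def Dl (s : ℕ → N) (k : ℕ) : N :=
  (((List.range k).reverse).map (fun j => ((List.range (j + 1)).map s).prod)).prod

theorem Pi_zero (s : ℕ → N) : Pi s 0 = 1 := by simp [Pi]
theorem Pi_succ (s : ℕ → N) (k : ℕ) : Pi s (k + 1) = Pi s k * s k := by
  simp [Pi, List.range_succ]
theorem Pi_succ_left (s : ℕ → N) (k : ℕ) : Pi s (k + 1) = s 0 * Pi (fun i => s (i + 1)) k := by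
  simp only [Pi, List.range_succ_eq_map, List.map_cons, List.prod_cons, List.map_map]
  rfl
theorem Dl_zero (s : ℕ → N) : Dl s 0 = 1 := by simp [Dl]
theorem Dl_succ (s : ℕ → N) (k : ℕ) : Dl s (k + 1) = Pi s (k + 1) * Dl s k := by
  simp [Dl, Pi, List.range_succ]

/-- `s` satisfies the braid relations on indices below `m` -/
structure BR (s : ℕ → N) (m : ℕ) : Prop where
  far : ∀ i j, i + 1 < j → j < m → s i * s j = s j * s i
  adj : ∀ i, i + 1 < m → s i * s (i + 1) * s i = s (i + 1) * s i * s (i + 1)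

variable {s : ℕ → N} {m : ℕ}

theorem BR.Pi_comm (h : BR s m) (j : ℕ) (hj : j < m) (k : ℕ) (hk : k < j) :
    Commute (s j) (Pi s k) := by
  induction k with
  | zero => rw [Pi_zero]; exact Commute.one_right _
  | succ k ih =>
    rw [Pi_succ]
    exact (ih (by omega)).mul_right (h.far k j (by omega) hj).symm

theorem BR.Dl_comm (h : BR s m) (j : ℕ) (hj : j < m) (k : ℕ) (hk : k < j) :
    Commute (s j) (Dl s k) := by
  induction k with
  | zero => rw [Dl_zero]; exact Commute.one_right _
  | succ k ih =>
    rw [Dl_succ]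
    exact (h.Pi_comm j hj _ hk).mul_right (ih (by omega))

theorem BR.shift (h : BR s m) (i k : ℕ) (hk : i + 1 < k) (hm : k ≤ m) :
    s (i + 1) * Pi s k = Pi s k * s i := by
  induction k with
  | zero => omega
  | succ k ih =>
    rcases Nat.lt_or_ge (i + 1) k with h1 | h1
    · rw [Pi_succ, ← mul_assoc, ih h1 (by omega), mul_assoc, mul_assoc,
        h.far i k h1 (by omega)]
    · obtain rfl : k = i + 1 := by omega
      rw [Pi_succ, Pi_succ]
      have c := h.Pi_comm (i + 1) (by omega) i (by omega)
      have e := h.adj i (by omega)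
      calc s (i + 1) * (Pi s i * s i * s (i + 1))
          = (s (i + 1) * Pi s i) * s i * s (i + 1) := by simp only [mul_assoc]
        _ = Pi s i * (s (i + 1) * s i * s (i + 1)) := by rw [c.eq]; simp only [mul_assoc]
        _ = Pi s i * s i * s (i + 1) * s i := by rw [← e]; simp only [mul_assoc]

theorem BR.shiftPi (h : BR s m) (l j : ℕ) (hl : l + 1 ≤ m) (hj : j ≤ l) :
    Pi (fun i => s (i + 1)) j * Pi s (l + 1) = Pi s (l + 1) * Pi s j := by
  induction j with
  | zero => simp [Pi_zero]
  | succ j ih =>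
    rw [Pi_succ, Pi_succ s j, mul_assoc, h.shift j (l + 1) (by omega) hl, ← mul_assoc,
      ih (by omega), mul_assoc]

theorem BR.sq (h : BR s m) (l : ℕ) (hl : l + 1 ≤ m) :
    s 0 * (Pi s (l + 1) * Pi s l) = Pi s (l + 1) * Pi s (l + 1) := by
  rw [← h.shiftPi l l hl le_rfl, ← mul_assoc, ← Pi_succ_left]

theorem BR.flip (h : BR s m) (k : ℕ) : ∀ i, i < k → k ≤ m →
    s i * Dl s k = Dl s k * s (k - 1 - i) := by
  induction k with
  | zero => intro i hi; omega
  | succ l ih =>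
    intro i hi hm
    cases i with
    | zero =>
      cases l with
      | zero => simp [Dl_succ, Dl_zero, Pi_succ, Pi_zero]
      | succ l =>
        have c := h.Dl_comm (l + 1) (by omega) l (by omega)
        have e := h.sq (l + 1) (by omega)
        rw [Dl_succ, Dl_succ]
        show _ = _ * s (l + 1)
        calc s 0 * (Pi s (l + 1 + 1) * (Pi s (l + 1) * Dl s l))
            = (s 0 * (Pi s (l + 1 + 1) * Pi s (l + 1))) * Dl s l := by simp only [mul_assoc]
          _ = Pi s (l + 1 + 1) * Pi s (l + 1 + 1) * Dl s l := by rw [e]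
          _ = Pi s (l + 1 + 1) * (Pi s (l + 1) * s (l + 1)) * Dl s l := by
            rw [← Pi_succ s (l + 1)]
          _ = Pi s (l + 1 + 1) * Pi s (l + 1) * (s (l + 1) * Dl s l) := by
            simp only [mul_assoc]
          _ = _ := by rw [c.eq]; simp only [mul_assoc]
    | succ i =>
      rw [Dl_succ, ← mul_assoc, h.shift i (l + 1) hi hm, mul_assoc, ih i (by omega) (by omega),
        ← mul_assoc]
      congr 2
      omega

theorem Pi_mem (s : ℕ → N) (m k : ℕ) (hk : k ≤ m) :
    Pi s k ∈ Submonoid.closure (Set.image s (Set.Iio m)) := by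
  induction k with
  | zero => rw [Pi_zero]; exact one_mem _
  | succ k ih =>
    rw [Pi_succ]
    exact mul_mem (ih (by omega)) (Submonoid.subset_closure ⟨k, by simpa using hk, rfl⟩)

theorem Dl_mem (s : ℕ → N) (m k : ℕ) (hk : k ≤ m) :
    Dl s k ∈ Submonoid.closure (Set.image s (Set.Iio m)) := by
  induction k with
  | zero => rw [Dl_zero]; exact one_mem _
  | succ k ih =>
    rw [Dl_succ]
    exact mul_mem (Pi_mem s m _ hk) (ih (by omega))

theorem BR.dvd (h : BR s m) (k : ℕ) : ∀ i, i < k → k ≤ m →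
    ∃ r ∈ Submonoid.closure (Set.image s (Set.Iio m)), Dl s k = s i * r := by
  induction k with
  | zero => intro i hi; omega
  | succ l ih =>
    intro i hi hm
    cases i with
    | zero =>
      refine ⟨Pi (fun i => s (i + 1)) l * Dl s l, mul_mem ?_ (Dl_mem s m l (by omega)), ?_⟩
      · refine Submonoid.closure_mono ?_ (Pi_mem (fun i => s (i + 1)) l l le_rfl)
        rintro _ ⟨i, hi, rfl⟩
        exact ⟨i + 1, by simp at hi ⊢; omega, rfl⟩
      · rw [Dl_succ, Pi_succ_left, mul_assoc]
    | succ i =>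
      obtain ⟨r, hr, e⟩ := ih i (by omega) (by omega)
      refine ⟨Pi s (l + 1) * r, mul_mem (Pi_mem s m _ hm) hr, ?_⟩
      rw [Dl_succ, e, ← mul_assoc, ← h.shift i (l + 1) hi hm, mul_assoc]

end delta

section ore

/-- central localization of a left cancellative monoid -/
theorem embed {M : Type} [Monoid M] (lc : ∀ a b c : M, a * b = a * c → b = c) (δ : M)
    (hδ : ∀ a, Commute δ a) :
    ∃ (H : Type) (_ : Monoid H) (f : M →* H), Function.Injective f ∧ IsUnit (f δ) := by
  classical
  have hc : ∀ s ∈ Submonoid.powers δ, ∀ a, s * a = a * s := by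
    rintro _ ⟨k, rfl⟩ a
    exact ((hδ a).pow_left k).eq
  let _ : OreLocalization.OreSet (Submonoid.powers δ) :=
    { ore_right_cancel := fun r₁ r₂ s h => ⟨s, by rw [hc s s.2, hc s s.2, h]⟩
      oreNum := fun r _ => r
      oreDenom := fun _ s => s
      ore_eq := fun r s => hc s s.2 r }
  refine ⟨OreLocalization (Submonoid.powers δ) M, inferInstance,
    OreLocalization.numeratorHom, ?_, ?_⟩
  · intro a b h
    rw [OreLocalization.numeratorHom_apply, OreLocalization.numeratorHom_apply,
      OreLocalization.oreDiv_eq_iff] at h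
    obtain ⟨u, v, h1, h2⟩ := h
    simp only [OneMemClass.coe_one, mul_one] at h2
    rw [Submonoid.smul_def, smul_eq_mul, smul_eq_mul, ← h2] at h1
    exact (lc _ _ _ h1).symm
  · exact OreLocalization.numerator_isUnit (⟨δ, Submonoid.mem_powers δ⟩ : Submonoid.powers δ)

end ore

section mon

/-- the positive braid monoid -/
abbrev BM (m : ℕ) := (bcon m).Quotient

/-- class of a word -/
def wd {m : ℕ} (u : List (Fin m)) : BM m := ((FreeMonoid.ofList u : FreeMonoid (Fin m)) : BM m)

theorem wd_eq {m : ℕ} {u v : List (Fin m)} : wd u = wd v ↔ Eqv u v := (bcon m).eq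

theorem wd_surj {m : ℕ} (a : BM m) : ∃ u, wd u = a := by
  induction a using Con.induction_on with
  | _ x => exact ⟨x.toList, rfl⟩

theorem wd_append {m : ℕ} (u v : List (Fin m)) : wd (u ++ v) = wd u * wd v := rfl
theorem wd_cons {m : ℕ} (i : Fin m) (v : List (Fin m)) : wd (i :: v) = wd [i] * wd v := rfl
theorem wd_nil {m : ℕ} : wd ([] : List (Fin m)) = 1 := rfl

theorem BM_cancel {m : ℕ} (a b c : BM m) (h : a * b = a * c) : b = c := by
  obtain ⟨u, rfl⟩ := wd_surj a
  induction u with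
  | nil => simpa [wd_nil] using h
  | cons i u ih =>
    rw [wd_cons, mul_assoc, mul_assoc] at h
    apply ih
    obtain ⟨x, hx⟩ := wd_surj (wd u * b)
    obtain ⟨y, hy⟩ := wd_surj (wd u * c)
    rw [← hx, ← hy, ← wd_cons, ← wd_cons, wd_eq] at h
    rw [← hx, ← hy, wd_eq]
    exact (key (x.length + 1) i i x y (by omega) h).cancel

/-- natural-indexed generators of the monoid -/
def ms (m : ℕ) (i : ℕ) : BM m := if h : i < m then wd [⟨i, h⟩] else 1

theorem ms_BR (m : ℕ) : BR (ms m) m where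
  far i j h h' := by
    simp only [ms, h', dif_pos, show i < m by omega]
    rw [← wd_cons, ← wd_cons, wd_eq]
    exact Eqv.far _ (Or.inl h)
  adj i h := by
    simp only [ms, h, dif_pos, show i < m by omega]
    simp only [← wd_append]
    rw [wd_eq]
    exact Eqv.adj _ (Or.inl rfl)

theorem BM_embed (m : ℕ) : ∃ (H : Type) (_ : Monoid H) (f : BM m →* H),
    Function.Injective f ∧ ∀ i, IsUnit (f (wd [i])) := by
  have fl := (ms_BR m).flip m
  have hc1 : ∀ i : Fin m, Commute (Dl (ms m) m * Dl (ms m) m) (wd [i]) := by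
    intro i
    have e : ms m i = wd [i] := by simp [ms]
    have h1 := fl i i.2 le_rfl
    have h2 := fl (m - 1 - i) (by omega) le_rfl
    rw [show m - 1 - (m - 1 - (i : ℕ)) = i by omega] at h2
    rw [← e]
    refine Commute.symm ?_
    show _ * _ = _ * _
    rw [← mul_assoc, h1, mul_assoc, h2, mul_assoc]
  have hc : ∀ a : BM m, Commute (Dl (ms m) m * Dl (ms m) m) a := by
    intro a
    obtain ⟨u, rfl⟩ := wd_surj a
    induction u with
    | nil => exact Commute.one_right _
    | cons i u ih => rw [wd_cons]; exact (hc1 i).mul_right ih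
  obtain ⟨H, _, f, hf, hu⟩ := embed BM_cancel (Dl (ms m) m * Dl (ms m) m) hc
  refine ⟨H, _, f, hf, fun i => ?_⟩
  obtain ⟨r, -, hr⟩ := (ms_BR m).dvd m i i.2 le_rfl
  have e : ms m i = wd [i] := by simp [ms]
  rw [e] at hr
  set q := r * Dl (ms m) m with hq
  have e1 : wd [i] * q = Dl (ms m) m * Dl (ms m) m := by rw [hq, ← mul_assoc, ← hr]
  have e2 : q * wd [i] = Dl (ms m) m * Dl (ms m) m := by
    apply BM_cancel (wd [i])
    rw [← mul_assoc, e1, (hc1 i).eq]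
  obtain ⟨w, hw⟩ := hu
  rw [isUnit_iff_exists_and_exists]
  refine ⟨⟨f q * ↑w⁻¹, ?_⟩, ⟨↑w⁻¹ * f q, ?_⟩⟩
  · rw [← mul_assoc, ← map_mul, e1, ← hw, Units.mul_inv]
  · rw [mul_assoc, ← map_mul, e2, ← hw, Units.inv_mul]

end mon

end BraidAux

namespace BraidGroup
open BraidAux

theorem σ_far {n : ℕ} {i j : Fin (n - 1)} (h : Far i j) : σ i * σ j = σ j * σ i := by
  have key : ∀ i j : Fin (n - 1), (i : ℕ) + 1 < j → σ i * σ j = σ j * σ i := by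
    intro i j h
    have := PresentedGroup.one_of_mem (rels := braidRels n) (Or.inl ⟨i, j, h, rfl⟩)
    simp only [map_mul, map_inv] at this
    change σ i * σ j * (σ i)⁻¹ * (σ j)⁻¹ = 1 at this
    rw [mul_inv_eq_one, mul_inv_eq_iff_eq_mul] at this
    exact this
  rcases h with h | h
  · exact key i j h
  · exact (key j i h).symm

theorem σ_adj {n : ℕ} {i j : Fin (n - 1)} (h : Adj i j) :
    σ i * σ j * σ i = σ j * σ i * σ j := by
  have key : ∀ i j : Fin (n - 1), (i : ℕ) + 1 = j → σ i * σ j * σ i = σ j * σ i * σ j := by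
    intro i j h
    have := PresentedGroup.one_of_mem (rels := braidRels n) (Or.inr ⟨i, j, h, rfl⟩)
    simp only [map_mul, map_inv] at this
    change σ i * σ j * σ i * (σ j * σ i * σ j)⁻¹ = 1 at this
    rw [mul_inv_eq_one] at this
    exact this
  rcases h with h | h
  · exact key i j h
  · exact (key j i h).symm

/-- image of a positive word -/
def wp {n : ℕ} (u : List (Fin (n - 1))) : BraidGroup n := (u.map σ).prod

theorem wp_cons {n : ℕ} (i : Fin (n - 1)) (u : List (Fin (n - 1))) :
    wp (i :: u) = σ i * wp u := by simp [wp]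

theorem wp_mem {n : ℕ} (u : List (Fin (n - 1))) : wp u ∈ positives n := by
  induction u with
  | nil => exact one_mem _
  | cons i u ih =>
    rw [wp_cons]
    exact mul_mem (Submonoid.subset_closure ⟨i, rfl⟩) ih

theorem exists_wp {n : ℕ} {x : BraidGroup n} (h : x ∈ positives n) : ∃ u, wp u = x := by
  induction h using Submonoid.closure_induction with
  | mem x hx => obtain ⟨i, rfl⟩ := hx; exact ⟨[i], by simp [wp]⟩
  | one => exact ⟨[], rfl⟩
  | mul x y _ _ hx hy =>
    obtain ⟨u, rfl⟩ := hx
    obtain ⟨v, rfl⟩ := hy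
    exact ⟨u ++ v, by simp [wp]⟩

theorem wp_step {n : ℕ} {u v : List (Fin (n - 1))} (h : Step u v) : wp u = wp v := by
  induction h with
  | far i j w h => simp only [wp_cons, ← mul_assoc, σ_far h]
  | adj i j w h => simp only [wp_cons, ← mul_assoc, σ_adj h]
  | cons i _ ih => rw [wp_cons, wp_cons, ih]

theorem wp_eqv {n : ℕ} {u v : List (Fin (n - 1))} (h : Eqv u v) : wp u = wp v := by
  induction h with
  | refl => rfl
  | tail _ h ih => exact ih.trans (wp_step h)

theorem wp_inj {n : ℕ} {u v : List (Fin (n - 1))} (h : wp u = wp v) : Eqv u v := by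
  obtain ⟨H, _, f, hf, hu⟩ := BM_embed (n - 1)
  choose g hg using hu
  have hr : ∀ r ∈ braidRels n, FreeGroup.lift g r = 1 := by
    rintro r (⟨i, j, h, rfl⟩ | ⟨i, j, h, rfl⟩)
    · simp only [map_mul, map_inv, FreeGroup.lift_apply_of]
      rw [mul_inv_eq_one, mul_inv_eq_iff_eq_mul]
      ext
      rw [Units.val_mul, Units.val_mul, hg, hg, ← map_mul, ← map_mul]
      congr 1
      rw [← wd_cons, ← wd_cons, wd_eq]
      exact Eqv.far _ (Or.inl h)
    · simp only [map_mul, map_inv, FreeGroup.lift_apply_of]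
      rw [mul_inv_eq_one]
      ext
      simp only [Units.val_mul, hg, ← map_mul]
      congr 1
      simp only [← wd_append]
      rw [wd_eq]
      exact Eqv.adj _ (Or.inl h)
  have hF : ∀ w : List (Fin (n - 1)), ((PresentedGroup.toGroup hr (wp w) : Hˣ) : H) = f (wd w) := by
    intro w
    induction w with
    | nil => simp [wp, wd_nil]
    | cons i w ih =>
      rw [wp_cons, map_mul, Units.val_mul, ih, wd_cons, map_mul]
      congr 1
      unfold σ
      rw [PresentedGroup.toGroup.of, hg]
  rw [← wd_eq]
  apply hf
  rw [← hF, ← hF, h]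

theorem keyG {n : ℕ} {i j : Fin (n - 1)} {a b : BraidGroup n} (ha : a ∈ positives n)
    (hb : b ∈ positives n) (h : σ i * a = σ j * b) :
    i = j ∨ (Adj i j ∧ ∃ w ∈ positives n, a = σ j * σ i * w) ∨
      (Far i j ∧ ∃ w ∈ positives n, a = σ j * w) := by
  obtain ⟨u, rfl⟩ := exists_wp ha
  obtain ⟨v, rfl⟩ := exists_wp hb
  rw [← wp_cons, ← wp_cons] at h
  rcases key (u.length + 1) i j u v (by omega) (wp_inj h) with ⟨h, _⟩ | ⟨h, w, h1, _⟩ | ⟨h, w, h1, _⟩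
  · exact Or.inl h
  · refine Or.inr (Or.inl ⟨h, wp w, wp_mem w, ?_⟩)
    rw [wp_eqv h1, wp_cons, wp_cons, mul_assoc]
  · refine Or.inr (Or.inr ⟨h, wp w, wp_mem w, ?_⟩)
    rw [wp_eqv h1, wp_cons]

/-- length homomorphism -/
def lenHom (n : ℕ) : BraidGroup n →* Multiplicative ℤ :=
  PresentedGroup.toGroup (f := fun _ => Multiplicative.ofAdd (1 : ℤ)) (by
    rintro r (⟨i, j, h, rfl⟩ | ⟨i, j, h, rfl⟩) <;> simp)

/-- length -/
def len {n : ℕ} (x : BraidGroup n) : ℤ := (lenHom n x).toAdd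

theorem len_mul {n : ℕ} (x y : BraidGroup n) : len (x * y) = len x + len y := by simp [len]
theorem len_inv {n : ℕ} (x : BraidGroup n) : len (x⁻¹) = - len x := by simp [len]
theorem len_one {n : ℕ} : len (1 : BraidGroup n) = 0 := by simp [len]
theorem len_σ {n : ℕ} (i : Fin (n - 1)) : len (σ i) = 1 := by
  unfold len lenHom σ
  rw [PresentedGroup.toGroup.of]; rfl
theorem len_zpow {n : ℕ} (x : BraidGroup n) (k : ℤ) : len (x ^ k) = k * len x := by simp [len]
theorem len_pow {n : ℕ} (x : BraidGroup n) (k : ℕ) : len (x ^ k) = k * len x := by simp [len]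
theorem len_wp {n : ℕ} (u : List (Fin (n - 1))) : len (wp u) = u.length := by
  induction u with
  | nil => exact len_one
  | cons i u ih => rw [wp_cons, len_mul, len_σ, ih]; push_cast [List.length_cons]; ring

theorem pos_cases {n : ℕ} {x : BraidGroup n} (h : x ∈ positives n) :
    x = 1 ∨ ∃ i, ∃ y ∈ positives n, x = σ i * y := by
  obtain ⟨u, rfl⟩ := exists_wp h
  cases u with
  | nil => exact Or.inl rfl
  | cons i u => exact Or.inr ⟨i, wp u, wp_mem u, wp_cons i u⟩

theorem len_nonneg {n : ℕ} {x : BraidGroup n} (h : x ∈ positives n) : 0 ≤ len x := by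
  obtain ⟨u, rfl⟩ := exists_wp h
  rw [len_wp]; positivity

theorem eq_one_of_len {n : ℕ} {x : BraidGroup n} (h : x ∈ positives n) (h0 : len x ≤ 0) :
    x = 1 := by
  obtain ⟨u, rfl⟩ := exists_wp h
  rw [len_wp] at h0
  have : u.length = 0 := by omega
  rw [List.length_eq_zero_iff] at this
  subst this; rfl

instance instPO (n : ℕ) : PartialOrder (BraidGroup n) where
  le x y := x⁻¹ * y ∈ positives n
  le_refl x := by simp only [inv_mul_cancel]; exact one_mem _
  le_trans x y z h h' := by
    have := mul_mem h h'
    rwa [show x⁻¹ * y * (y⁻¹ * z) = x⁻¹ * z by group] at this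
  le_antisymm x y h h' := by
    have l1 := len_nonneg h'
    have := eq_one_of_len h (by rw [len_mul, len_inv] at l1 ⊢; linarith)
    exact (inv_mul_eq_one.1 this)

theorem le_def' {n : ℕ} {x y : BraidGroup n} : x ≤ y ↔ x⁻¹ * y ∈ positives n := Iff.rfl

theorem one_le {n : ℕ} {x : BraidGroup n} : 1 ≤ x ↔ x ∈ positives n := by
  rw [le_def', inv_one, one_mul]

theorem mul_le_mul_iff' {n : ℕ} (a : BraidGroup n) {x y : BraidGroup n} :
    a * x ≤ a * y ↔ x ≤ y := by
  rw [le_def', le_def', show (a * x)⁻¹ * (a * y) = x⁻¹ * y by group]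

theorem le_mul_pos {n : ℕ} (a : BraidGroup n) {x : BraidGroup n} (h : x ∈ positives n) :
    a ≤ a * x := by
  rw [le_def', inv_mul_cancel_left]; exact h

theorem leftDvd_iff {n : ℕ} {x y : BraidGroup n} : LeftDvd x y ↔ x ≤ y := by
  rw [le_def']
  constructor
  · rintro ⟨p, hp, rfl⟩; rwa [inv_mul_cancel_left]
  · intro h; exact ⟨_, h, mul_inv_cancel_left x y⟩

theorem len_mono {n : ℕ} {x y : BraidGroup n} (h : x ≤ y) : len x ≤ len y := by
  have := len_nonneg h
  rw [len_mul, len_inv] at this; linarith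

theorem eq_of_le_len {n : ℕ} {x y : BraidGroup n} (h : x ≤ y) (h' : len y ≤ len x) : x = y := by
  have := eq_one_of_len h (by rw [len_mul, len_inv]; linarith)
  exact inv_mul_eq_one.1 this

theorem σ_pos {n : ℕ} (i : Fin (n - 1)) : σ i ∈ positives n := Submonoid.subset_closure ⟨i, rfl⟩

theorem lcm_atoms {n : ℕ} (i j : Fin (n - 1)) : ∃ p ∈ positives n, ∃ q ∈ positives n,
    σ i * p = σ j * q ∧ ∀ x, σ i ≤ x → σ j ≤ x → σ i * p ≤ x := by
  rcases tri i j with h | h | h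
  · subst h
    exact ⟨1, one_mem _, 1, one_mem _, rfl, fun x hx _ => by rwa [mul_one]⟩
  · refine ⟨σ j * σ i, mul_mem (σ_pos _) (σ_pos _), σ i * σ j, mul_mem (σ_pos _) (σ_pos _),
      ?_, ?_⟩
    · rw [← mul_assoc, ← mul_assoc, σ_adj h]
    · intro x hx hy
      rcases keyG hx hy (by rw [mul_inv_cancel_left, mul_inv_cancel_left]) with e | ⟨_, w, hw, e⟩ | ⟨h', _⟩
      · exact absurd e h.ne
      · rw [inv_mul_eq_iff_eq_mul] at e
        rw [e, mul_le_mul_iff']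
        exact le_mul_pos _ hw
      · exact absurd h' h.not_far
  · refine ⟨σ j, σ_pos _, σ i, σ_pos _, σ_far h, ?_⟩
    intro x hx hy
    rcases keyG hx hy (by rw [mul_inv_cancel_left, mul_inv_cancel_left]) with e | ⟨h', _⟩ | ⟨_, w, hw, e⟩
    · exact absurd e h.ne
    · exact absurd h h'.not_far
    · rw [inv_mul_eq_iff_eq_mul] at e
      rw [e, mul_le_mul_iff']
      exact le_mul_pos _ hw

theorem lcm_pos {n : ℕ} (N : ℕ) : ∀ m : BraidGroup n, len m < N → ∀ c d, 1 ≤ c → 1 ≤ d →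
    c ≤ m → d ≤ m → ∃ e, c ≤ e ∧ d ≤ e ∧ ∀ m', c ≤ m' → d ≤ m' → e ≤ m' := by
  induction N with
  | zero =>
    intro m hm c d hc _ hcm
    have := len_mono (hc.trans hcm)
    rw [len_one] at this
    push_cast at hm; omega
  | succ N IH =>
    intro m hm c d hc hd hcm hdm
    rcases pos_cases (one_le.1 hc) with rfl | ⟨i, c', hc', rfl⟩
    · exact ⟨d, hd, le_rfl, fun _ _ h => h⟩
    rcases pos_cases (one_le.1 hd) with rfl | ⟨j, d', hd', rfl⟩
    · exact ⟨_, le_rfl, hc, fun _ h _ => h⟩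
    rw [← one_le] at hc' hd'
    obtain ⟨p, hp, q, hq, epq, hlcm⟩ := lcm_atoms i j
    -- the induction hypothesis below a generator
    have IH' : ∀ k : Fin (n - 1), ∀ c d : BraidGroup n, 1 ≤ c → 1 ≤ d → σ k * c ≤ m →
        σ k * d ≤ m → ∃ e, 1 ≤ e ∧ σ k * c ≤ σ k * e ∧ σ k * d ≤ σ k * e ∧
          ∀ m', σ k * c ≤ m' → σ k * d ≤ m' → σ k * e ≤ m' := by
      intro k c d hc hd hcm hdm
      have tr : ∀ x y : BraidGroup n, σ k * x ≤ y ↔ x ≤ (σ k)⁻¹ * y := by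
        intro x y
        rw [← mul_le_mul_iff' (σ k) (x := x), mul_inv_cancel_left]
      obtain ⟨e, h1, h2, h3⟩ := IH ((σ k)⁻¹ * m)
        (by rw [len_mul, len_inv, len_σ]; push_cast at hm; linarith) c d hc hd
        ((tr _ _).1 hcm) ((tr _ _).1 hdm)
      refine ⟨e, hc.trans h1, (mul_le_mul_iff' _).2 h1, (mul_le_mul_iff' _).2 h2, ?_⟩
      intro m' h4 h5
      exact (tr _ _).2 (h3 _ ((tr _ _).1 h4) ((tr _ _).1 h5))
    have hi : ∀ x, σ i * c' ≤ x → σ i ≤ x := fun x h => (le_mul_pos _ (one_le.1 hc')).trans h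
    have hj : ∀ x, σ j * d' ≤ x → σ j ≤ x := fun x h => (le_mul_pos _ (one_le.1 hd')).trans h
    have h0 := hlcm m (hi m hcm) (hj m hdm)
    obtain ⟨e1, he1, h1, h2, h3⟩ := IH' i c' p hc' (one_le.2 hp) hcm h0
    obtain ⟨e2, he2, h4, h5, h6⟩ := IH' j d' q hd' (one_le.2 hq) hdm (epq ▸ h0)
    -- `σ j * e2 = σ i * r`
    obtain ⟨r, hr, er⟩ : ∃ r, 1 ≤ r ∧ σ j * e2 = σ i * r := by
      refine ⟨(σ i)⁻¹ * (σ j * e2), ?_, by group⟩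
      rw [← mul_le_mul_iff' (σ i), mul_inv_cancel_left, mul_one]
      rw [← epq] at h5
      exact (le_mul_pos _ hp).trans h5
    obtain ⟨e3, he3, h7, h8, h9⟩ := IH' i e1 r he1 hr (h3 m hcm h0)
      (er ▸ h6 m hdm (epq ▸ h0))
    refine ⟨σ i * e3, h1.trans h7, h4.trans (er ▸ h8), ?_⟩
    intro m' hc'' hd''
    have h0' := hlcm m' (hi _ hc'') (hj _ hd'')
    exact h9 m' (h3 m' hc'' h0') (er ▸ h6 m' hd'' (epq ▸ h0'))

theorem σ'_BR (n : ℕ) : BR (σ' n) (n - 1) where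
  far i j h h' := by
    simp only [σ', h', dif_pos, show i < n - 1 by omega]
    exact σ_far (Or.inl h)
  adj i h := by
    simp only [σ', h, dif_pos, show i < n - 1 by omega]
    exact σ_adj (Or.inl rfl)

theorem σ'_coe {n : ℕ} (i : Fin (n - 1)) : σ' n i = σ i := by simp [σ']

theorem σ'_closure (n : ℕ) : Submonoid.closure (Set.image (σ' n) (Set.Iio (n - 1))) ≤ positives n := by
  rw [Submonoid.closure_le]
  rintro _ ⟨i, hi, rfl⟩
  have : i < n - 1 := hi
  simp only [σ', this, dif_pos]
  exact σ_pos _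

theorem Δ_eq (n : ℕ) : Δ n = Dl (σ' n) (n - 1) := rfl

theorem Δ_pos (n : ℕ) : Δ n ∈ positives n := σ'_closure n (Dl_mem _ _ _ le_rfl)

theorem σ_le_Δ {n : ℕ} (i : Fin (n - 1)) : σ i ≤ Δ n := by
  obtain ⟨r, hr, e⟩ := (σ'_BR n).dvd (n - 1) i i.2 le_rfl
  rw [Δ_eq, e, σ'_coe]
  exact le_mul_pos _ (σ'_closure n hr)

theorem σ_Δ {n : ℕ} (i : Fin (n - 1)) : σ i * Δ n = Δ n * σ i.rev := by
  have := (σ'_BR n).flip (n - 1) i i.2 le_rfl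
  rw [σ'_coe, ← Δ_eq] at this
  rw [this, ← σ'_coe i.rev, Fin.val_rev]
  congr 2
  omega

theorem conj_σ {n : ℕ} (i : Fin (n - 1)) : (Δ n)⁻¹ * σ i * Δ n = σ i.rev := by
  rw [mul_assoc, σ_Δ, inv_mul_cancel_left]

theorem conj_σ' {n : ℕ} (i : Fin (n - 1)) : Δ n * σ i * (Δ n)⁻¹ = σ i.rev := by
  have := σ_Δ i.rev
  rw [Fin.rev_rev] at this
  rw [← this, mul_inv_cancel_right]

theorem conj_pos_nat {n : ℕ} {x : BraidGroup n} (hx : x ∈ positives n) :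
    Δ n * x * (Δ n)⁻¹ ∈ positives n ∧ (Δ n)⁻¹ * x * Δ n ∈ positives n := by
  induction hx using Submonoid.closure_induction with
  | mem x hx =>
    obtain ⟨i, rfl⟩ := hx
    rw [conj_σ, conj_σ']
    exact ⟨σ_pos _, σ_pos _⟩
  | one => simp only [mul_one, mul_inv_cancel, inv_mul_cancel]; exact ⟨one_mem _, one_mem _⟩
  | mul x y _ _ hx hy =>
    refine ⟨?_, ?_⟩
    · have := mul_mem hx.1 hy.1
      rwa [show Δ n * x * (Δ n)⁻¹ * (Δ n * y * (Δ n)⁻¹) = Δ n * (x * y) * (Δ n)⁻¹ by group] at this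
    · have := mul_mem hx.2 hy.2
      rwa [show (Δ n)⁻¹ * x * Δ n * ((Δ n)⁻¹ * y * Δ n) = (Δ n)⁻¹ * (x * y) * Δ n by group] at this

theorem conj_pos {n : ℕ} {x : BraidGroup n} (hx : x ∈ positives n) (p : ℤ) :
    Δ n ^ p * x * Δ n ^ (-p) ∈ positives n := by
  induction p using Int.induction_on with
  | zero => simpa using hx
  | succ i ih =>
    have := (conj_pos_nat ih).1
    rw [show Δ n ^ ((i : ℤ) + 1) = Δ n * Δ n ^ (i : ℤ) by group,
      show Δ n ^ (-((i : ℤ) + 1)) = Δ n ^ (-(i : ℤ)) * (Δ n)⁻¹ by group]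
    simpa only [mul_assoc] using this
  | pred i ih =>
    have := (conj_pos_nat ih).2
    rw [show Δ n ^ (-(i : ℤ) - 1) = (Δ n)⁻¹ * Δ n ^ (-(i : ℤ)) by group,
      show Δ n ^ (-(-(i : ℤ) - 1)) = Δ n ^ (-(-(i : ℤ))) * Δ n by group]
    simpa only [mul_assoc] using this

theorem mul_Δ_mono {n : ℕ} {x y : BraidGroup n} (p : ℤ) : x * Δ n ^ p ≤ y * Δ n ^ p ↔ x ≤ y := by
  have key : ∀ (x y : BraidGroup n) (p : ℤ), x ≤ y → x * Δ n ^ p ≤ y * Δ n ^ p := by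
    intro x y p h
    rw [le_def'] at h ⊢
    have := conj_pos h (-p)
    rwa [show Δ n ^ (-p) * (x⁻¹ * y) * Δ n ^ (- -p) = (x * Δ n ^ p)⁻¹ * (y * Δ n ^ p) by group]
      at this
  refine ⟨fun h => ?_, key x y p⟩
  have := key _ _ (-p) h
  rwa [show x * Δ n ^ p * Δ n ^ (-p) = x by group, show y * Δ n ^ p * Δ n ^ (-p) = y by group]
    at this

theorem Δ_sq_central {n : ℕ} (x : BraidGroup n) : (Δ n)⁻¹ * x * Δ n = Δ n * x * (Δ n)⁻¹ := by
  have : (MulAut.conj (Δ n)⁻¹).toMonoidHom = (MulAut.conj (Δ n)).toMonoidHom := by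
    apply PresentedGroup.ext
    intro i
    have h1 := conj_σ i
    have h2 := conj_σ' i
    unfold σ at h1 h2
    simp [h2, h1]
  have h := DFunLike.congr_fun this x
  simpa using h

theorem exists_pow_pos {n : ℕ} (x : BraidGroup n) : ∃ k : ℕ, 1 ≤ Δ n ^ k * x := by
  obtain ⟨w, rfl⟩ := PresentedGroup.mk_surjective _ x
  induction w using FreeGroup.induction_on with
  | C1 => exact ⟨0, by simp⟩
  | of i => exact ⟨0, by rw [pow_zero, one_mul, one_le]; exact σ_pos i⟩
  | inv_of i _ =>
    refine ⟨1, ?_⟩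
    rw [one_le, pow_one]
    have h1 : PresentedGroup.mk (braidRels n) (FreeGroup.of i)⁻¹ = (σ i)⁻¹ := rfl
    rw [h1]
    have h2 := (conj_pos_nat (σ_le_Δ i)).1
    rwa [show Δ n * ((σ i)⁻¹ * Δ n) * (Δ n)⁻¹ = Δ n * (σ i)⁻¹ by group] at h2
  | mul a b ha hb =>
    obtain ⟨k, hk⟩ := ha
    obtain ⟨l, hl⟩ := hb
    refine ⟨l + k, ?_⟩
    rw [one_le] at *
    have := mul_mem (conj_pos hk l) hl
    rw [map_mul]
    rw [zpow_neg, zpow_natCast] at this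
    convert this using 1
    rw [pow_add]; group

theorem exists_common_pos {n : ℕ} (c d : BraidGroup n) :
    ∃ t : BraidGroup n, 1 ≤ t * c ∧ 1 ≤ t * d := by
  have mono : ∀ (k l : ℕ) (x : BraidGroup n), 1 ≤ Δ n ^ k * x → 1 ≤ Δ n ^ (l + k) * x := by
    intro k l x h
    rw [pow_add, mul_assoc, one_le]
    exact mul_mem (pow_mem (Δ_pos n) l) (one_le.1 h)
  obtain ⟨k, hk⟩ := exists_pow_pos c
  obtain ⟨l, hl⟩ := exists_pow_pos d
  exact ⟨Δ n ^ (l + k), mono k l c hk, by rw [add_comm]; exact mono l k d hl⟩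

theorem join_exists {n : ℕ} (c d m : BraidGroup n) (hc : c ≤ m) (hd : d ≤ m) :
    ∃ e, c ≤ e ∧ d ≤ e ∧ ∀ m', c ≤ m' → d ≤ m' → e ≤ m' := by
  obtain ⟨t, h1, h2⟩ := exists_common_pos c d
  obtain ⟨e, h3, h4, h5⟩ := lcm_pos ((len (t * m)).toNat + 1) (t * m) (by push_cast; omega)
    (t * c) (t * d) h1 h2 ((mul_le_mul_iff' t).2 hc) ((mul_le_mul_iff' t).2 hd)
  have tr : ∀ x : BraidGroup n, t * (t⁻¹ * x) = x := fun x => by group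
  refine ⟨t⁻¹ * e, ?_, ?_, ?_⟩
  · rw [← mul_le_mul_iff' t, tr]; exact h3
  · rw [← mul_le_mul_iff' t, tr]; exact h4
  · intro m' h h'
    rw [← mul_le_mul_iff' t, tr]
    exact h5 _ ((mul_le_mul_iff' t).2 h) ((mul_le_mul_iff' t).2 h')

theorem meet_exists {n : ℕ} (a b : BraidGroup n) :
    ∃ c, c ≤ a ∧ c ≤ b ∧ ∀ d, d ≤ a → d ≤ b → d ≤ c := by
  obtain ⟨t, h1, h2⟩ := exists_common_pos a b
  have lb : ∃ c, c ≤ a ∧ c ≤ b := by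
    refine ⟨t⁻¹, ?_, ?_⟩
    · rw [← mul_le_mul_iff' t, mul_inv_cancel]; exact h1
    · rw [← mul_le_mul_iff' t, mul_inv_cancel]; exact h2
  obtain ⟨z, ⟨c, hca, hcb, rfl⟩, hz⟩ := Int.exists_greatest_of_bdd
    (P := fun z => ∃ c, c ≤ a ∧ c ≤ b ∧ len c = z)
    ⟨len a, by rintro z ⟨c, h, _, rfl⟩; exact len_mono h⟩
    (by obtain ⟨c, h, h'⟩ := lb; exact ⟨_, c, h, h', rfl⟩)
  refine ⟨c, hca, hcb, fun d hda hdb => ?_⟩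
  obtain ⟨e, he1, he2, he3⟩ := join_exists c d a hca hda
  have := hz _ ⟨e, he3 a hca hda, he3 b hcb hdb, rfl⟩
  rw [eq_of_le_len he1 this]
  exact he2

noncomputable instance instSI (n : ℕ) : SemilatticeInf (BraidGroup n) :=
  { instPO n with
    inf := fun a b => (meet_exists a b).choose
    inf_le_left := fun a b => (meet_exists a b).choose_spec.1
    inf_le_right := fun a b => (meet_exists a b).choose_spec.2.1
    le_inf := fun c a b h h' => (meet_exists a b).choose_spec.2.2 c h h' }

end BraidGroup

namespace BraidGroup
open BraidAux

theorem Δ_sq_comm {n : ℕ} (x : BraidGroup n) : Commute (Δ n * Δ n) x := by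
  have h := Δ_sq_central x
  show _ = _
  rw [mul_assoc, inv_mul_eq_iff_eq_mul] at h
  have h2 : x * Δ n * Δ n = Δ n * (Δ n * x * (Δ n)⁻¹) * Δ n := by rw [h]
  rw [show Δ n * (Δ n * x * (Δ n)⁻¹) * Δ n = Δ n * Δ n * x by group] at h2
  rw [← h2, mul_assoc]

theorem τ_eq {n : ℕ} (x : BraidGroup n) : τ n x = (Δ n)⁻¹ * x * Δ n := by
  have hs : ∀ i : Fin (n - 1), τ n (σ i) = σ i.rev := by
    refine Classical.epsilon_spec
      (p := fun f : BraidGroup n →* BraidGroup n => ∀ i : Fin (n - 1), f (σ i) = σ i.rev)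
      ⟨(MulAut.conj (Δ n)⁻¹).toMonoidHom, fun i => ?_⟩
    simpa using conj_σ i
  have : τ n = (MulAut.conj (Δ n)⁻¹).toMonoidHom := by
    apply PresentedGroup.ext
    intro i
    have h1 := conj_σ i
    have h2 := hs i
    unfold σ at h1 h2
    simp [h2, h1]
  rw [this]
  simp

theorem conj_even {n : ℕ} (k : ℤ) (x : BraidGroup n) :
    Δ n ^ (-(k + k)) * x * Δ n ^ (k + k) = x := by
  have h := ((Δ_sq_comm x).zpow_left k).eq
  have e : (Δ n * Δ n) ^ k = Δ n ^ (k + k) := by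
    rw [(Commute.refl (Δ n)).mul_zpow, zpow_add]
  rw [e] at h
  rw [mul_assoc, ← h]
  group

theorem τpow_eq {n : ℕ} (u : ℤ) (x : BraidGroup n) : τpow u x = Δ n ^ (-u) * x * Δ n ^ u := by
  unfold τpow
  split_ifs with h
  · obtain ⟨k, rfl⟩ := h
    rw [conj_even]
  · rw [Int.not_even_iff_odd] at h
    obtain ⟨k, rfl⟩ := h
    rw [τ_eq]
    rw [show Δ n ^ (-(2 * k + 1)) * x * Δ n ^ (2 * k + 1)
      = (Δ n)⁻¹ * (Δ n ^ (-(k + k)) * x * Δ n ^ (k + k)) * Δ n by group, conj_even]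

theorem mul_inf' {n : ℕ} (a x y : BraidGroup n) : a * (x ⊓ y) = a * x ⊓ a * y := by
  have tr : ∀ x y : BraidGroup n, a⁻¹ * x ≤ y ↔ x ≤ a * y := fun x y => by
    rw [← mul_le_mul_iff' a, mul_inv_cancel_left]
  apply eq_of_forall_le_iff
  intro c
  rw [le_inf_iff, ← tr, ← tr, ← tr, le_inf_iff]

theorem inf_mul' {n : ℕ} (x y : BraidGroup n) (p : ℤ) :
    (x ⊓ y) * Δ n ^ p = x * Δ n ^ p ⊓ y * Δ n ^ p := by
  have tr : ∀ x y : BraidGroup n, x * Δ n ^ (-p) ≤ y ↔ x ≤ y * Δ n ^ p := fun x y => by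
    rw [← mul_Δ_mono p, show x * Δ n ^ (-p) * Δ n ^ p = x by group]
  apply eq_of_forall_le_iff
  intro c
  rw [le_inf_iff, ← tr, ← tr, ← tr, le_inf_iff]

theorem len_Δ (n : ℕ) : len (Δ n) = ((n * (n - 1) / 2 : ℕ) : ℤ) := by
  have h1 : ∀ k ≤ n - 1, len (Pi (σ' n) k) = k := by
    intro k
    induction k with
    | zero => intro _; rw [Pi_zero, len_one]; rfl
    | succ k ih =>
      intro hk
      have : σ' n k = σ ⟨k, by omega⟩ := by simp only [σ', show k < n - 1 by omega, dif_pos]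
      rw [Pi_succ, len_mul, ih (by omega), this, len_σ]; push_cast; ring
  have h2 : ∀ k ≤ n - 1, len (Dl (σ' n) k) * 2 = k * (k + 1) := by
    intro k
    induction k with
    | zero => intro _; rw [Dl_zero, len_one]; rfl
    | succ k ih =>
      intro hk
      rw [Dl_succ, len_mul, add_mul, ih (by omega), h1 _ hk]; push_cast; ring
  have h3 := h2 (n - 1) le_rfl
  rw [← Δ_eq] at h3
  rcases n with _ | n
  · simp at h3 ⊢; exact h3
  · simp only [Nat.add_sub_cancel] at h3 ⊢
    have : (n + 1) * n / 2 * 2 = (n + 1) * n := by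
      apply Nat.div_mul_cancel
      rw [mul_comm]
      exact (Nat.even_mul_succ_self n).two_dvd
    zify at this
    push_cast
    nlinarith

theorem one_le_Δ (n : ℕ) : 1 ≤ Δ n := one_le.2 (Δ_pos n)

theorem len_Δ_pos {n : ℕ} (hn : 2 ≤ n) : 1 ≤ len (Δ n) := by
  have := len_mono (σ_le_Δ (⟨0, by omega⟩ : Fin (n - 1)))
  rwa [len_σ] at this

theorem not_σ_le_one {n : ℕ} (i : Fin (n - 1)) : ¬ σ i ≤ (1 : BraidGroup n) := by
  intro h
  have := len_mono h
  rw [len_σ, len_one] at this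
  omega

theorem Δ_zpow_mono {n : ℕ} {j k : ℤ} (h : j ≤ k) (x : BraidGroup n) :
    x * Δ n ^ j ≤ x * Δ n ^ k := by
  rw [mul_le_mul_iff', le_def']
  obtain ⟨m, hm⟩ := Int.eq_ofNat_of_zero_le (sub_nonneg.2 h)
  rw [← zpow_neg, ← zpow_add, show -j + k = m by omega, zpow_natCast]
  exact pow_mem (Δ_pos n) m

theorem prod_pos {n : ℕ} (L : List (BraidGroup n)) (h : ∀ a ∈ L, IsPermBraid a) : 1 ≤ L.prod := by
  rw [one_le]
  exact Submonoid.list_prod_mem _ fun a ha => (h a ha).1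

theorem head_eq {n : ℕ} (L : List (BraidGroup n)) (h : ∀ a ∈ L, IsPermBraid a)
    (hc : L.IsChain IsLeftWeighted) : (L.head?).getD 1 = Δ n ⊓ L.prod := by
  induction L with
  | nil => simpa using one_le_Δ n
  | cons a L ih =>
    simp only [List.head?_cons, Option.getD_some, List.prod_cons]
    have ha := h a (by simp)
    have hL : ∀ b ∈ L, IsPermBraid b := fun b hb => h b (by simp [hb])
    have ih := ih hL hc.tail
    have h1 : a ≤ Δ n ⊓ a * L.prod :=
      le_inf (leftDvd_iff.1 ha.2) (le_mul_pos _ (one_le.1 (prod_pos L hL)))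
    rcases pos_cases h1 with e | ⟨i, y, hy, e⟩
    · exact inv_mul_eq_one.1 e
    · exfalso
      rw [inv_mul_eq_iff_eq_mul] at e
      have h2 : a * σ i ≤ Δ n ⊓ a * L.prod := by
        rw [e, ← mul_assoc]; exact le_mul_pos _ hy
      have h3 : σ i ≤ a⁻¹ * Δ n := by
        rw [← mul_le_mul_iff' a, mul_inv_cancel_left]; exact h2.trans inf_le_left
      have h4 : σ i ≤ L.prod := (mul_le_mul_iff' a).1 (h2.trans inf_le_right)
      have h5 : σ i ≤ (L.head?).getD 1 := ih ▸ le_inf (σ_le_Δ i) h4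
      cases L with
      | nil => exact not_σ_le_one i h5
      | cons b L =>
        rw [List.isChain_cons_cons] at hc
        exact hc.1 i ⟨leftDvd_iff.2 h3, leftDvd_iff.2 h5⟩

theorem wf_pos {n : ℕ} (N : ℕ) : ∀ p : BraidGroup n, len p < N → 1 ≤ p → ¬ Δ n ≤ p →
    ∃ L : List (BraidGroup n), (∀ a ∈ L, IsPermBraid a ∧ a ≠ 1 ∧ a ≠ Δ n) ∧
      L.IsChain IsLeftWeighted ∧ p = L.prod := by
  induction N with
  | zero =>
    intro p hp h1
    have := len_nonneg (one_le.1 h1)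
    push_cast at hp; omega
  | succ N IH =>
    intro p hp h1 hΔ
    rcases pos_cases (one_le.1 h1) with rfl | ⟨i, y, hy, e⟩
    · exact ⟨[], by simp, by simp, rfl⟩
    · set a := Δ n ⊓ p with ha
      have hi : σ i ≤ a := le_inf (σ_le_Δ i) (e ▸ le_mul_pos _ hy)
      have hla : 1 ≤ len a := by have := len_mono hi; rwa [len_σ] at this
      have h1a : 1 ≤ a := le_inf (one_le_Δ n) h1
      have hle : 1 ≤ a⁻¹ * p := by
        rw [one_le]; exact (inf_le_right : a ≤ p)
      obtain ⟨L, hL, hc, e'⟩ := IH (a⁻¹ * p)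
        (by rw [len_mul, len_inv]; push_cast at hp; linarith) hle (by
          intro h
          apply hΔ
          have h2 : a * Δ n ≤ p := by rw [← mul_le_mul_iff' a⁻¹, inv_mul_cancel_left]; exact h
          have h3 := (mul_Δ_mono (n := n) 1).2 h1a
          rw [zpow_one, one_mul] at h3
          exact h3.trans h2)
      refine ⟨a :: L, ?_, ?_, ?_⟩
      · intro b hb
        rcases List.mem_cons.1 hb with rfl | hb
        · refine ⟨⟨one_le.1 h1a, leftDvd_iff.2 inf_le_left⟩, ?_, ?_⟩
          · intro h; rw [h, len_one] at hla; omega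
          · intro h; apply hΔ; rw [← h]; exact inf_le_right
        · exact hL b hb
      · cases L with
        | nil => simp
        | cons b L =>
          rw [List.isChain_cons_cons]
          refine ⟨?_, hc⟩
          rintro j ⟨hj1, hj2⟩
          rw [leftDvd_iff] at hj1 hj2
          have hb : b ≤ a⁻¹ * p := by
            rw [e', List.prod_cons]
            exact le_mul_pos _ (one_le.1 (prod_pos L fun c hc => (hL c (by simp [hc])).1))
          have h2 : a * σ j ≤ a := by
            refine le_inf ?_ ?_
            · rw [← mul_le_mul_iff' a⁻¹, inv_mul_cancel_left]; exact hj1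
            · rw [← mul_le_mul_iff' a⁻¹, inv_mul_cancel_left]; exact hj2.trans hb
          have := len_mono h2
          rw [len_mul, len_σ] at this
          omega
      · rw [List.prod_cons, ← e', mul_inv_cancel_left]

theorem inf_exists {n : ℕ} (hn : 2 ≤ n) (x : BraidGroup n) :
    ∃ u : ℤ, Δ n ^ u ≤ x ∧ ∀ k, Δ n ^ k ≤ x → k ≤ u := by
  refine Int.exists_greatest_of_bdd (P := fun k => Δ n ^ k ≤ x) ⟨max (len x) 0, ?_⟩ ?_
  · intro k hk
    have := len_mono hk
    rw [len_zpow] at this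
    have h1 := len_Δ_pos hn
    rcases le_or_gt k 0 with h | h
    · exact le_max_of_le_right h
    · exact le_max_of_le_left (by nlinarith)
  · obtain ⟨k, hk⟩ := exists_pow_pos x
    refine ⟨-(k : ℤ), ?_⟩
    rw [← mul_le_mul_iff' (Δ n ^ k)]
    simpa using hk

theorem wf_spec {n : ℕ} (hn : 2 ≤ n) (x : BraidGroup n) : IsWeightedForm (wf x).1 (wf x).2 x := by
  refine Classical.epsilon_spec (p := fun p : ℤ × List (BraidGroup n) => IsWeightedForm p.1 p.2 x) ?_
  obtain ⟨u, h1, h2⟩ := inf_exists hn x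
  obtain ⟨L, hL, hc, e⟩ := wf_pos ((len (Δ n ^ (-u) * x)).toNat + 1) (Δ n ^ (-u) * x)
    (by push_cast; omega)
    (by rw [← mul_le_mul_iff' (Δ n ^ u)]; simpa using h1)
    (by
      intro h
      have : Δ n ^ (u + 1) ≤ x := by
        rw [← mul_le_mul_iff' (Δ n ^ (-u)), ← zpow_add]
        simpa using h
      have := h2 _ this
      omega)
  exact ⟨(u, L), hL, hc, by rw [← e]; group⟩

theorem binf_bhead {n : ℕ} (hn : 2 ≤ n) (x : BraidGroup n) (u : ℤ) (h1 : Δ n ^ u ≤ x)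
    (h2 : ¬ Δ n ^ (u + 1) ≤ x) :
    binf x = u ∧ bhead x = Δ n ^ (-u) * (Δ n ⊓ x * Δ n ^ (-u)) * Δ n ^ u := by
  obtain ⟨hL, hc, e⟩ := wf_spec hn x
  have hp := prod_pos _ fun a ha => (hL a ha).1
  have hh := head_eq _ (fun a ha => (hL a ha).1) hc
  change x = Δ n ^ (binf x) * (wf x).2.prod at e
  change bhead x = _ at hh
  have hprod : (wf x).2.prod = Δ n ^ (-(binf x)) * x := by
    rw [zpow_neg, eq_inv_mul_iff_mul_eq]; exact e.symm
  have h3 : Δ n ^ (binf x) ≤ x := by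
    conv_rhs => rw [e]
    exact le_mul_pos _ (one_le.1 hp)
  have h4 : ¬ Δ n ^ (binf x + 1) ≤ x := by
    intro h
    have : Δ n ≤ (wf x).2.prod := by
      rw [hprod, ← mul_le_mul_iff' (Δ n ^ (binf x))]
      simpa [zpow_add_one] using h
    rw [inf_eq_left.2 this] at hh
    unfold bhead at hh
    cases hw : (wf x).2 with
    | nil =>
      rw [hw] at hh
      have h5 := len_Δ_pos hn
      rw [← hh] at h5
      simp [len_one] at h5
    | cons a L =>
      rw [hw] at hh
      exact (hL a (by simp [hw])).2.2 (by simpa using hh)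
  have hbu : binf x = u := by
    have A : ∀ a b : ℤ, Δ n ^ a ≤ x → ¬ Δ n ^ (b + 1) ≤ x → a ≤ b := by
      intro a b ha hb
      by_contra hlt
      apply hb
      have := Δ_zpow_mono (show b + 1 ≤ a by omega) (1 : BraidGroup n)
      rw [one_mul, one_mul] at this
      exact this.trans ha
    exact le_antisymm (A _ _ h3 h2) (A _ _ h1 h4)
  refine ⟨hbu, ?_⟩
  rw [hh, hprod, hbu, mul_inf', inf_mul']
  congr 1 <;> group

theorem wcw {n : ℕ} (hn : 2 ≤ n) (z : BraidGroup n) (u : ℤ) (h1 : 1 ≤ z * Δ n ^ (-u))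
    (h2 : ¬ Δ n ≤ z * z * Δ n ^ (-(2 * u)))
    (h3 : Δ n ⊓ z * z * Δ n ^ (-(2 * u)) = Δ n ⊓ z * Δ n ^ (-u)) : IsWCW z := by
  have tr : ∀ (x : BraidGroup n) (k : ℤ), Δ n ^ (u + k) ≤ x ↔ Δ n ^ k ≤ x * Δ n ^ (-u) := by
    intro x k
    rw [← mul_Δ_mono (-u), ← zpow_add]
    simp
  have hup : ∀ x y : BraidGroup n, x ≤ y → z * x * Δ n ^ (-u) ≤ z * y * Δ n ^ (-u) := by
    intro x y h
    rw [mul_Δ_mono, mul_le_mul_iff']; exact h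
  have ezz : z * (z * Δ n ^ (-u)) * Δ n ^ (-u) = z * z * Δ n ^ (-(2 * u)) := by
    rw [show -(2 * u) = -u + -u by ring, zpow_add]; simp only [mul_assoc]
  have h4 : z * Δ n ^ (-u) ≤ z * z * Δ n ^ (-(2 * u)) := by
    have := hup _ _ h1
    rwa [mul_one, ezz] at this
  obtain ⟨b1, b2⟩ := binf_bhead hn z u (by have := (tr z 0).2 (by simpa using h1); simpa using this)
    (by rw [tr, zpow_one]; exact fun h => h2 (h.trans h4))
  set s := Δ n ⊓ z * Δ n ^ (-u) with hs
  have hτ : τpow (binf z) (bhead z) = s := by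
    rw [τpow_eq, b1, b2]
    have := conj_even u s
    rw [neg_add, zpow_add, zpow_add] at this
    simpa only [mul_assoc] using this
  have h1s : 1 ≤ s := le_inf (one_le_Δ n) h1
  have hsle : s ≤ z * Δ n ^ (-u) := inf_le_right
  have hφs : z * s * Δ n ^ (-u) ≤ z * z * Δ n ^ (-(2 * u)) := by
    have := hup _ _ hsle
    rwa [ezz] at this
  have h1φ : 1 ≤ z * s * Δ n ^ (-u) := by
    have := hup _ _ h1s
    rw [mul_one] at this
    exact h1.trans this
  have key : Δ n ⊓ z * s * Δ n ^ (-u) = s := by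
    apply le_antisymm
    · exact (le_inf inf_le_left (inf_le_right.trans hφs)).trans (le_of_eq h3)
    · refine le_inf inf_le_left ?_
      calc s = Δ n ⊓ z * z * Δ n ^ (-(2 * u)) := h3.symm
        _ ≤ z * (Δ n ⊓ z * Δ n ^ (-u)) * Δ n ^ (-u) := by
          rw [mul_inf', inf_mul', ezz]
          refine le_inf (inf_le_left.trans ?_) inf_le_right
          have := (mul_Δ_mono (n := n) 1).2 h1
          rw [one_mul, zpow_one] at this
          refine this.trans (le_of_eq ?_)
          rw [mul_assoc, mul_assoc, ← zpow_add_one, ← zpow_one_add, add_comm]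
  unfold IsWCW
  rw [hτ]
  obtain ⟨-, b4⟩ := binf_bhead hn (z * s) u
    (by have := (tr (z * s) 0).2 (by simpa using h1φ); simpa using this)
    (by rw [tr, zpow_one]; exact fun h => h2 (h.trans hφs))
  rw [b4, b2, key]

end BraidGroup

namespace BraidGroup

/-- The map `x ↦ z^i x Δ^(-p i)`. -/
def psi {n : ℕ} (z : BraidGroup n) (p : ℤ) (i : ℕ) (x : BraidGroup n) : BraidGroup n :=
  z ^ i * x * Δ n ^ (-(p * i))

theorem psi_add {n : ℕ} (z : BraidGroup n) (p : ℤ) (i j : ℕ) (x : BraidGroup n) :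
    psi z p i (psi z p j x) = psi z p (i + j) x := by
  unfold psi
  rw [pow_add, show -(p * ((i + j : ℕ) : ℤ)) = -(p * j) + -(p * i) by push_cast; ring, zpow_add]
  simp only [mul_assoc]

theorem psi_zero {n : ℕ} (z : BraidGroup n) (p : ℤ) (x : BraidGroup n) : psi z p 0 x = x := by
  simp [psi]

theorem psi_one {n : ℕ} (z : BraidGroup n) (p : ℤ) (x : BraidGroup n) :
    psi z p 1 x = z * x * Δ n ^ (-p) := by
  simp [psi]

theorem psi_le {n : ℕ} (z : BraidGroup n) (p : ℤ) (i : ℕ) {x y : BraidGroup n} :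
    psi z p i x ≤ psi z p i y ↔ x ≤ y := by
  unfold psi
  rw [mul_Δ_mono, mul_le_mul_iff']

theorem psi_inf {n : ℕ} (z : BraidGroup n) (p : ℤ) (i : ℕ) (x y : BraidGroup n) :
    psi z p i (x ⊓ y) = psi z p i x ⊓ psi z p i y := by
  unfold psi
  rw [mul_inf', inf_mul']

theorem psi_Δ {n : ℕ} (z : BraidGroup n) (p : ℤ) (i : ℕ) (x : BraidGroup n) (k : ℤ) :
    psi z p i (x * Δ n ^ k) = psi z p i x * Δ n ^ k := by
  unfold psi
  simp only [mul_assoc, ← zpow_add, add_comm]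

theorem int_pigeon (D : ℕ) (g : ℕ → ℤ) (hg : ∀ k, g k ≤ g (k + 1)) (h0 : 0 ≤ g 0)
    (h1 : g (D + 1) ≤ D) : ∃ k ≤ D, g k = g (k + 1) := by
  by_contra hc
  push Not at hc
  have : ∀ k ≤ D + 1, (k : ℤ) ≤ g k := by
    intro k
    induction k with
    | zero => intro _; simpa using h0
    | succ k ih =>
      intro hk
      have a := ih (by omega)
      have b := hc k (by omega)
      have c := hg k
      push_cast
      omega
  have := this (D + 1) le_rfl
  push_cast at this
  omega

theorem chain {n : ℕ} (hn : 2 ≤ n) (z : BraidGroup n) (u : ℤ) (h1 : 1 ≤ z * Δ n ^ (-u)) (D : ℕ)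
    (hD : len (Δ n) = D) : ∃ M : ℕ, 1 ≤ M ∧ M ≤ D ∧
      Δ n ⊓ psi z u (2 * M) 1 = Δ n ⊓ psi z u M 1 := by
  set s : ℕ → BraidGroup n := fun k => Δ n ⊓ psi z u k 1 with hs
  have hΔ : Δ n ≤ psi z u 1 (Δ n) := by
    have := (mul_Δ_mono (n := n) 1).2 h1
    rw [one_mul, zpow_one] at this
    refine this.trans (le_of_eq ?_)
    rw [psi_one, mul_assoc, mul_assoc, ← zpow_add_one, ← zpow_one_add, add_comm]
  have rec1 : ∀ k, s (k + 1) = Δ n ⊓ psi z u 1 (s k) := by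
    intro k
    simp only [hs]
    rw [psi_inf, psi_add, ← inf_assoc, inf_eq_left.2 hΔ, add_comm k 1]
  have mono : ∀ k, s k ≤ s (k + 1) := by
    intro k
    refine inf_le_inf le_rfl ?_
    have : psi z u k 1 ≤ psi z u k (psi z u 1 1) := by
      rw [psi_le, psi_one, mul_one]; exact h1
    rwa [psi_add] at this
  obtain ⟨k, hk, e⟩ := int_pigeon D (fun k => len (s k)) (fun k => len_mono (mono k))
    (by
      have : (1 : BraidGroup n) ≤ s 0 := le_inf (one_le_Δ n) (by rw [psi_zero])
      exact len_nonneg (one_le.1 this))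
    (by rw [← hD]; exact len_mono inf_le_left)
  have e1 : s k = s (k + 1) := eq_of_le_len (mono k) e.symm.le
  have stab : ∀ j, s (k + j) = s k := by
    intro j
    induction j with
    | zero => rfl
    | succ j ih => rw [← add_assoc, rec1, ih, ← rec1, e1]
  have hD1 : 1 ≤ D := by have := len_Δ_pos hn; omega
  refine ⟨max k 1, le_max_right _ _, max_le hk hD1, ?_⟩
  show s _ = s _
  obtain ⟨a, ha⟩ := Nat.exists_eq_add_of_le (le_max_left k 1)
  rw [show 2 * max k 1 = k + (2 * a + k) by omega, stab]
  rw [ha, stab]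

/-- Finite meets. -/
noncomputable def bm {n : ℕ} (f : ℕ → BraidGroup n) : ℕ → BraidGroup n
  | 0 => f 0
  | m + 1 => bm f m ⊓ f (m + 1)

theorem le_bm {n : ℕ} (f : ℕ → BraidGroup n) (m : ℕ) (x : BraidGroup n) :
    x ≤ bm f m ↔ ∀ i ≤ m, x ≤ f i := by
  induction m with
  | zero => simp [bm]
  | succ m ih =>
    rw [bm, le_inf_iff, ih]
    constructor
    · rintro ⟨a, b⟩ i hi
      rcases Nat.lt_or_ge m i with h | h
      · rwa [show i = m + 1 by omega]
      · exact a i h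
    · intro a
      exact ⟨fun i hi => a i (by omega), a _ le_rfl⟩

theorem bm_le {n : ℕ} (f : ℕ → BraidGroup n) (m i : ℕ) (hi : i ≤ m) : bm f m ≤ f i :=
  (le_bm f m _).1 le_rfl i hi

theorem psi_bm {n : ℕ} (z : BraidGroup n) (p : ℤ) (i : ℕ) (f : ℕ → BraidGroup n) (m : ℕ) :
    psi z p i (bm f m) = bm (fun k => psi z p i (f k)) m := by
  induction m with
  | zero => rfl
  | succ m ih => rw [bm, bm, psi_inf, ih]

/-- Some conjugate of `z` has infimum at least `p`. -/
def R {n : ℕ} (z : BraidGroup n) (p : ℤ) : Prop := ∃ c, c ≤ z * c * Δ n ^ (-p)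

theorem R.down {n : ℕ} {z : BraidGroup n} {p q : ℤ} (h : R z p) (hq : q ≤ p) : R z q := by
  obtain ⟨c, hc⟩ := h
  exact ⟨c, hc.trans (Δ_zpow_mono (by omega) _)⟩

theorem R.bound {n : ℕ} {z : BraidGroup n} {p : ℤ} (h : R z p) : p * len (Δ n) ≤ len z := by
  obtain ⟨c, hc⟩ := h
  have := len_mono hc
  rw [len_mul, len_mul, len_zpow] at this
  linarith

theorem R_exists {n : ℕ} (z : BraidGroup n) : ∃ p, R z p := by
  obtain ⟨k, hk⟩ := exists_pow_pos z
  refine ⟨-(k : ℤ), 1, ?_⟩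
  rw [mul_one, neg_neg, zpow_natCast, one_le]
  have := conj_pos (one_le.1 hk) (-(k : ℤ))
  rw [neg_neg, zpow_natCast, zpow_neg, zpow_natCast, inv_mul_cancel_left] at this
  exact this

theorem R_pow_iff {n : ℕ} (z : BraidGroup n) (p : ℤ) (m : ℕ) :
    R (z ^ m) (p * m) ↔ ∃ c, c ≤ psi z p m c := Iff.rfl

theorem psi_iter {n : ℕ} {z : BraidGroup n} {p : ℤ} {c : BraidGroup n} (hc : c ≤ psi z p 1 c)
    (m : ℕ) : c ≤ psi z p m c := by
  induction m with
  | zero => rw [psi_zero]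
  | succ m ih =>
    have := (psi_le z p m).2 hc
    rw [psi_add] at this
    exact ih.trans this

theorem R.pow {n : ℕ} {z : BraidGroup n} {p : ℤ} (h : R z p) (m : ℕ) : R (z ^ m) (p * m) := by
  obtain ⟨c, hc⟩ := h
  exact ⟨c, psi_iter (by rwa [psi_one]) m⟩

theorem R.root {n : ℕ} {z : BraidGroup n} {p : ℤ} {m : ℕ} (hm : 1 ≤ m) (h : R (z ^ m) (p * m)) :
    R z p := by
  obtain ⟨c, hc⟩ := h
  change c ≤ psi z p m c at hc
  obtain ⟨m, rfl⟩ : ∃ k, m = k + 1 := ⟨m - 1, by omega⟩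
  refine ⟨bm (fun i => psi z p i c) m, ?_⟩
  rw [← psi_one, psi_bm, le_bm]
  intro i hi
  rw [psi_add]
  rcases Nat.lt_or_ge i m with h | h
  · exact bm_le (fun i => psi z p i c) m _ (by omega)
  · have h0 := bm_le (fun i => psi z p i c) m 0 (by omega)
    rw [psi_zero] at h0
    rw [show 1 + i = m + 1 by omega]
    exact h0.trans hc

theorem R.gap {n : ℕ} {z : BraidGroup n} {p : ℤ} {D : ℕ} (hD : len (Δ n) = D)
    (h : R (z ^ (D + 1)) (p * (D + 1 : ℕ) - 1)) : R z p := by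
  obtain ⟨c, hc⟩ := h
  have hc : c ≤ psi z p (D + 1) c * Δ n ^ (1 : ℤ) := by
    refine hc.trans (le_of_eq ?_)
    unfold psi
    rw [mul_assoc _ _ (Δ n ^ (1 : ℤ)), ← zpow_add]
    congr 2
    ring
  set b := bm (fun i => psi z p i c) D with hb
  have up : ∀ x : BraidGroup n, x ≤ x * Δ n ^ (1 : ℤ) := fun x => by
    have := Δ_zpow_mono (show (0 : ℤ) ≤ 1 by omega) x
    rwa [zpow_zero, mul_one] at this
  have h1 : ∀ j ≤ D + 1, b ≤ psi z p j b * Δ n ^ (1 : ℤ) := by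
    intro j hj
    rw [hb, ← psi_Δ, ← one_mul (bm _ D * _), ← hb]
    have e : ∀ m, (bm (fun i => psi z p i c) m) * Δ n ^ (1 : ℤ)
        = bm (fun i => psi z p i c * Δ n ^ (1 : ℤ)) m := by
      intro m
      induction m with
      | zero => rfl
      | succ m ih => rw [bm, bm, inf_mul', ih]
    rw [one_mul, hb, e, psi_bm, le_bm]
    intro i hi
    rw [psi_Δ, psi_add]
    rcases Nat.lt_or_ge (j + i) (D + 1) with h | h
    · exact (bm_le (fun i => psi z p i c) D _ (by omega)).trans (up _)
    · obtain ⟨k, hk⟩ := Nat.exists_eq_add_of_le h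
      have h2 := (psi_le z p k).2 hc
      rw [psi_Δ, psi_add, show k + (D + 1) = j + i by omega] at h2
      exact (bm_le (fun i => psi z p i c) D k (by omega)).trans h2
  set B := bm (fun i => psi z p i b) with hB
  have hB0 : B 0 = b := by rw [hB]; exact psi_zero _ _ _
  have h2 : b * Δ n ^ (-1 : ℤ) ≤ B (D + 1) := by
    rw [hB, le_bm]
    intro j hj
    have := (mul_Δ_mono (-1)).2 (h1 j hj)
    rwa [mul_assoc (psi z p j b), ← zpow_add, show (1 : ℤ) + -1 = 0 by rfl, zpow_zero, mul_one]
      at this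
  have hle : ∀ k, B (k + 1) ≤ B k := fun k => inf_le_left
  obtain ⟨m, -, e⟩ := int_pigeon D (fun k => len b - len (B k))
    (fun k => by have := len_mono (hle k); linarith)
    (by simp only [hB0]; omega)
    (by
      have := len_mono h2
      rw [len_mul, len_zpow, hD] at this
      linarith)
  have e : B (m + 1) = B m := eq_of_le_len (hle m) (by linarith)
  refine ⟨B m, ?_⟩
  rw [← psi_one]
  conv_rhs => rw [hB, psi_bm]
  rw [le_bm]
  intro i hi
  rw [psi_add, ← e, hB]
  exact bm_le (fun i => psi z p i b) _ _ (by omega)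

end BraidGroup

namespace BraidGroup

theorem periodic_small {n : ℕ} (hn : n ≤ 2) (x : BraidGroup n) : IsPeriodic x := by
  have h1 : ∀ i : Fin (n - 1), σ i = Δ n := by
    intro i
    apply eq_of_le_len (σ_le_Δ i)
    rw [len_Δ, len_σ]
    have := i.2
    have : n = 2 := by omega
    subst this
    decide
  have h2 : x ∈ Subgroup.zpowers (Δ n) := by
    have h3 : (⊤ : Subgroup (BraidGroup n)) ≤ Subgroup.zpowers (Δ n) := by
      rw [← PresentedGroup.closure_range_of (braidRels n), Subgroup.closure_le]
      rintro _ ⟨i, rfl⟩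
      have := h1 i
      unfold σ at this
      rw [this]
      exact Subgroup.mem_zpowers _
    exact h3 (Subgroup.mem_top x)
  obtain ⟨k, rfl⟩ := h2
  refine ⟨2, by norm_num, k, ?_⟩
  show (Δ n ^ k) ^ 2 = _
  rw [← zpow_natCast, ← zpow_mul, mul_comm]
  rfl

theorem case_split {n : ℕ} (hn : 2 ≤ n) (D : ℕ) (hD : len (Δ n) = D) (x : BraidGroup n) (k : ℕ)
    (u : ℤ) (h : R (x ^ k) u) : ∃ M : ℕ, 1 ≤ M ∧ M ≤ D ∧
      (R (x ^ (k * M)) (u * M + 1) ∨ ∃ y, IsConj x y ∧ IsWCW (y ^ (k * M))) := by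
  obtain ⟨c, hc⟩ := h
  set y := c⁻¹ * x * c with hy
  have hyk : ∀ m : ℕ, y ^ m = c⁻¹ * x ^ m * c := by
    intro m
    have := conj_pow (a := c⁻¹) (b := x) (i := m)
    rwa [inv_inv] at this
  have h1 : 1 ≤ y ^ k * Δ n ^ (-u) := by
    rw [hyk, ← mul_le_mul_iff' c, mul_one]
    refine hc.trans (le_of_eq ?_)
    simp only [mul_assoc, mul_inv_cancel_left]
  obtain ⟨M, hM1, hM2, e⟩ := chain hn (y ^ k) u h1 D hD
  refine ⟨M, hM1, hM2, ?_⟩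
  have e1 : psi (y ^ k) u M 1 = y ^ (k * M) * Δ n ^ (-(u * M)) := by
    unfold psi; rw [mul_one, pow_mul]
  have e2 : psi (y ^ k) u (2 * M) 1
      = y ^ (k * M) * y ^ (k * M) * Δ n ^ (-(2 * (u * M))) := by
    unfold psi
    rw [mul_one, ← pow_mul, ← pow_add, show k * (2 * M) = k * M + k * M by ring]
    congr 2
    push_cast
    ring
  by_cases hΔ : Δ n ≤ psi (y ^ k) u M 1
  · left
    refine ⟨c, ?_⟩
    rw [e1, hyk, ← mul_le_mul_iff' c, ← mul_Δ_mono (-1)] at hΔ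
    simp only [mul_assoc, mul_inv_cancel_left, ← zpow_add] at hΔ
    rw [← zpow_one_add] at hΔ
    simp only [add_neg_cancel, zpow_zero, mul_one] at hΔ
    rw [mul_assoc, neg_add]
    exact hΔ
  · right
    refine ⟨y, isConj_iff.2 ⟨c⁻¹, by rw [inv_inv]⟩, ?_⟩
    apply wcw hn _ (u * M)
    · rw [← e1]
      apply psi_iter
      rw [psi_one, mul_one]; exact h1
    · rw [← e2, ← inf_eq_left, e, inf_eq_left]; exact hΔ
    · rw [← e1, ← e2, e]

/-- every pseudo-Anosov braid has a conjugate `y` and an exponent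
`1 ≤ M ≤ D³`, `D = n(n-1)/2`, with `y^M` weakly cyclically weighted. -/
theorem pA_wcw_power (n : ℕ) (x : BraidGroup n) (h : IsPseudoAnosov x) :
    ∃ y : BraidGroup n, IsConj x y ∧
      ∃ M : ℕ, 1 ≤ M ∧ M ≤ (n * (n - 1) / 2) ^ 3 ∧ IsWCW (y ^ M) := by
  rcases Nat.lt_or_ge 2 n with hn3 | hn
  swap
  · exact absurd (periodic_small hn x) h.1
  have hn : 2 ≤ n := by omega
  have hD := len_Δ n
  have hD3 : 3 ≤ n * (n - 1) / 2 := by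
    rw [Nat.le_div_iff_mul_le (by norm_num)]
    have : 2 ≤ n - 1 := by omega
    nlinarith
  set D := n * (n - 1) / 2 with hDdef
  have hF : ∀ k : ℕ, ∃ p : ℤ, R (x ^ k) p ∧ ∀ q, R (x ^ k) q → q ≤ p := by
    intro k
    refine Int.exists_greatest_of_bdd (P := fun p => R (x ^ k) p) ⟨max (len (x ^ k)) 0, ?_⟩
      (R_exists _)
    intro p hp
    have h1 := hp.bound
    have h2 := len_Δ_pos hn
    rcases le_or_gt p 0 with h | h
    · exact le_max_of_le_right h
    · exact le_max_of_le_left (by nlinarith)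
  choose F hF1 hF2 using hF
  have key : ∀ k j : ℕ, 1 ≤ j → (k : ℤ) * (D + 1) * F j < j * ((D + 1) * (F k + 1) - 1) := by
    intro k j hj
    by_contra hc
    push Not at hc
    have a := (hF1 j).pow (k * (D + 1))
    rw [← pow_mul, show j * (k * (D + 1)) = k * (D + 1) * j by ring, pow_mul] at a
    have b : R ((x ^ (k * (D + 1))) ^ j) (((F k + 1) * ((D + 1 : ℕ) : ℤ) - 1) * (j : ℕ)) :=
      a.down (by push_cast; linarith)
    have c := b.root hj
    rw [pow_mul] at c
    have d := hF2 _ _ (c.gap hD)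
    omega
  set S : Set ℝ := {r | ∃ k : ℕ, 1 ≤ k ∧ r = (F k : ℝ) / k} with hS
  have hDR : (3 : ℝ) ≤ D := by exact_mod_cast hD3
  have hub : ∀ k : ℕ, 1 ≤ k → ∀ r ∈ S, r ≤ ((F k : ℝ) + 1 - 1 / (D + 1)) / k := by
    rintro k hk _ ⟨j, hj, rfl⟩
    have a := key k j hj
    have a' : (k : ℝ) * (D + 1) * F j < j * ((D + 1) * (F k + 1) - 1) := by exact_mod_cast a
    have hk' : (0 : ℝ) < k := by exact_mod_cast hk
    have hj' : (0 : ℝ) < j := by exact_mod_cast hj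
    rw [div_le_div_iff₀ hj' hk']
    have e : ((F k : ℝ) + 1 - 1 / (D + 1)) * j = j * ((D + 1) * (F k + 1) - 1) / (D + 1) := by
      field_simp
    rw [e, le_div_iff₀ (by linarith)]
    linarith
  have hbdd : BddAbove S := ⟨_, fun r hr => hub 1 le_rfl r hr⟩
  set t := sSup S with ht
  have t1 : ∀ k : ℕ, 1 ≤ k → (F k : ℝ) ≤ k * t := by
    intro k hk
    have hk' : (0 : ℝ) < k := by exact_mod_cast hk
    have := le_csSup hbdd (show (F k : ℝ) / k ∈ S from ⟨k, hk, rfl⟩)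
    rw [div_le_iff₀ hk'] at this
    linarith
  have t2 : ∀ k : ℕ, 1 ≤ k → k * t ≤ (F k : ℝ) + 1 - 1 / (D + 1) := by
    intro k hk
    have hk' : (0 : ℝ) < k := by exact_mod_cast hk
    have := csSup_le (⟨_, 1, le_rfl, rfl⟩ : S.Nonempty) (hub k hk)
    rw [← ht, le_div_iff₀ hk'] at this
    linarith
  obtain ⟨j, k, hk0, hk1, hjk⟩ := Real.exists_int_int_abs_mul_sub_le t (n := D + 1) (by omega)
  obtain ⟨k, rfl⟩ := Int.eq_ofNat_of_zero_le hk0.le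
  have hk0 : 1 ≤ k := by omega
  have hk1 : k ≤ D + 1 := by exact_mod_cast hk1
  obtain ⟨M, hM1, hM2, hcase⟩ := case_split hn D hD x k (F k) (hF1 k)
  rcases hcase with hR | ⟨y, hy, hw⟩
  · exfalso
    have a := hF2 _ _ hR
    have a' : (F k : ℝ) * M + 1 ≤ F (k * M) := by exact_mod_cast a
    have b := t1 (k * M) (Nat.mul_pos hk0 hM1)
    push_cast at b hjk
    have c := t2 k hk0
    have hM' : (0 : ℝ) < M := by exact_mod_cast hM1
    have hM2' : (M : ℝ) ≤ D := by exact_mod_cast hM2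
    have d : 1 / (D : ℝ) ≤ k * t - F k := by
      rw [div_le_iff₀ (by linarith)]
      have : 1 ≤ (k * t - F k) * M := by linarith
      have : 0 ≤ k * t - F k := by nlinarith
      nlinarith
    have d1 : 1 / ((D : ℝ) + 1) ≤ 1 / D := one_div_le_one_div_of_le (by linarith) (by linarith)
    have d2 : 1 / ((D : ℝ) + 1 + 1) < 1 / (D + 1) :=
      one_div_lt_one_div_of_lt (by linarith) (by linarith)
    have d3 : 0 < 1 / ((D : ℝ) + 1 + 1) := by positivity
    rw [abs_le] at hjk
    rcases le_or_gt j (F k) with hj | hj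
    · have : (j : ℝ) ≤ F k := by exact_mod_cast hj
      linarith [hjk.2]
    · have : (F k : ℝ) + 1 ≤ j := by exact_mod_cast hj
      linarith [hjk.1]
  · refine ⟨y, hy, k * M, Nat.mul_pos hk0 hM1, ?_, hw⟩
    calc k * M ≤ (D + 1) * D := Nat.mul_le_mul hk1 hM2
      _ ≤ D ^ 3 := by
        have : D + 1 ≤ D ^ 2 := by nlinarith
        calc (D + 1) * D ≤ D ^ 2 * D := Nat.mul_le_mul_right _ this
          _ = D ^ 3 := by ring

end BraidGroup
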